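/- arXiv:1509.00106 — 3 statements merged into one kernel-verified Lean document; each statement's English description precedes it below -/
import Mathlib

section
/- Let τ_k ∈ (0,1], γ_k > 0, γ_{k+1} > 0, x^k ∈ dom g and x̃^k ∈ ℝ^p. Define x̂^k := (1 − τ_k)·x^k + τ_k·x̃^k, x^{k+1} := prox_{βg}( x̂^k − β·A u*_{γ_{k+1}}(Aᵀx̂^k) ) with β := γ_{k+1}/‖A‖², and x̃^{k+1} := x̃^k − (1/τ_k)·(x̂^k − x^{k+1}). Then for every x ∈ ℝ^p (in the extended reals): F_{γ_{k+1}}(x^{k+1}) ≤ (1 − τ_k)·F_{γ_k}(x^k) + τ_k·F(x) + (‖A‖²·τ_k²/(2γ_{k+1}))·[ ‖x̃^k − x‖² − ‖x̃^{k+1} − x‖² ] − R_k. -/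
open scoped RealInnerProductSpace BigOperators

/-!
The smoothed conjugate `z ↦ max_v ⟪z, v⟫ - ψ v` of a `μ`-strongly convex `ψ` has a `1/μ`-Lipschitz
gradient, the maximiser as a function of `z`. At the extrapolated point `x̂` this gives a quadratic
upper bound with curvature `‖A‖² / μ`, so one proximal step satisfies a three-point inequality
against every competitor `y`. Taking `y = (1 - τ) xₖ + τ x` turns the distances into `τ ‖x̃ - x‖`
and `τ ‖x̃₊ - x‖`, while the linearisation at `x̂` splits into its values at `xₖ` and at `x`. The
former is at most the smoothed value at `xₖ` minus a quadratic gap, corrected for the change of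
smoothing parameter; the latter is at most `f x - γ b(u*)`. The corrections add up to `-Rₖ`.
-/

section StrongConvexity

variable {E : Type*} [NormedAddCommGroup E] [NormedSpace ℝ E] {s : Set E} {f : E → ℝ} {m : ℝ}

theorem strongConvexOn_add_of_convexOn {g : E → ℝ} (hg : ConvexOn ℝ s g)
    (hf : StrongConvexOn s m f) : StrongConvexOn s m (g + f) := by
  simpa only [StrongConvexOn, zero_add] using hg.uniformConvexOn_zero.add hf

theorem strongConvexOn_subset {t : Set E} (hf : StrongConvexOn t m f) (hst : s ⊆ t)
    (hs : Convex ℝ s) : StrongConvexOn s m f :=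
  ⟨hs, fun _ hx _ hy => hf.2 (hst hx) (hst hy)⟩

theorem strongConvexOn_const_mul {c : ℝ} (hc : 0 ≤ c) (hf : StrongConvexOn s m f) :
    StrongConvexOn s (c * m) (fun x => c * f x) := by
  refine ⟨hf.1, fun x hx y hy a b ha hb hab => ?_⟩
  have h := mul_le_mul_of_nonneg_left (hf.2 hx hy ha hb hab) hc
  simp only [smul_eq_mul] at h ⊢
  linarith

-- Strong convexity along the segment from `x` to `y`, divided by its parameter `t`, as `t → 0`.
theorem add_sq_norm_sub_le_of_isMinOn (hf : StrongConvexOn s m f) {x y : E} (hx : x ∈ s)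
    (hmin : IsMinOn f s x) (hy : y ∈ s) : f x + m / 2 * ‖y - x‖ ^ 2 ≤ f y := by
  have on_segment : ∀ t ∈ Set.Ioo (0 : ℝ) 1, f x + (1 - t) * (m / 2 * ‖y - x‖ ^ 2) ≤ f y := by
    rintro t ⟨ht0, ht1⟩
    have hmem : (1 - t) • x + t • y ∈ s := hf.1 hx hy (by linarith) ht0.le (by ring)
    have hle := isMinOn_iff.mp hmin _ hmem
    have hsc := hf.2 hx hy (by linarith : 0 ≤ 1 - t) ht0.le (by ring)
    rw [smul_eq_mul, smul_eq_mul, norm_sub_rev] at hsc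
    refine le_of_mul_le_mul_left ?_ ht0
    linarith
  have hlim : Filter.Tendsto (fun t : ℝ => f x + (1 - t) * (m / 2 * ‖y - x‖ ^ 2))
      (nhdsWithin 0 (Set.Ioi 0)) (nhds (f x + (1 - 0) * (m / 2 * ‖y - x‖ ^ 2))) :=
    (Continuous.tendsto (by fun_prop) 0).mono_left nhdsWithin_le_nhds
  rw [sub_zero, one_mul] at hlim
  exact le_of_tendsto hlim
    (Filter.eventually_of_mem (Ioo_mem_nhdsGT one_pos) on_segment)

end StrongConvexity

section ConjugateOfStronglyConvex

variable {E : Type*} [NormedAddCommGroup E] [InnerProductSpace ℝ E] {D : Set E} {ψ : E → ℝ}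
  {μ : ℝ} {z : E} {u v : E}

theorem inner_sub_add_sq_le_of_isMaxOn (hψ : StrongConvexOn D μ ψ) (hu : u ∈ D)
    (hmax : IsMaxOn (fun v => ⟪z, v⟫ - ψ v) D u) (hv : v ∈ D) :
    ⟪z, v⟫ - ψ v + μ / 2 * ‖v - u‖ ^ 2 ≤ ⟪z, u⟫ - ψ u := by
  have hlin : ConvexOn ℝ D (fun v => ⟪-z, v⟫) := (innerₛₗ ℝ (-z)).convexOn hψ.1
  have hmin : IsMinOn ((fun v => ⟪-z, v⟫) + ψ) D u := by
    refine isMinOn_iff.mpr fun w hw => ?_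
    have := isMaxOn_iff.mp hmax w hw
    simp only [Pi.add_apply, inner_neg_left]
    linarith
  have h := add_sq_norm_sub_le_of_isMinOn (strongConvexOn_add_of_convexOn hlin hψ) hu hmin hv
  simp only [Pi.add_apply, inner_neg_left] at h
  linarith

theorem inner_le_sq_norm_add_sq_norm (hμ : 0 < μ) (z v : E) :
    ⟪z, v⟫ ≤ (2 * μ)⁻¹ * ‖z‖ ^ 2 + μ / 2 * ‖v‖ ^ 2 := by
  have hsq : (2 * μ)⁻¹ * ‖z - μ • v‖ ^ 2
      = (2 * μ)⁻¹ * ‖z‖ ^ 2 + μ / 2 * ‖v‖ ^ 2 - ⟪z, v⟫ := by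
    rw [norm_sub_sq_real, inner_smul_right, norm_smul, mul_pow, Real.norm_eq_abs, sq_abs]
    field_simp
    ring
  have : 0 ≤ (2 * μ)⁻¹ * ‖z - μ • v‖ ^ 2 := by positivity
  linarith

-- With `v` the maximiser at `z'`, this says that the conjugate of `ψ` is `1/μ`-smooth.
theorem inner_sub_le_inner_sub_add_sq_of_isMaxOn (hμ : 0 < μ) (hψ : StrongConvexOn D μ ψ)
    (hu : u ∈ D) (hmax : IsMaxOn (fun v => ⟪z, v⟫ - ψ v) D u) (hv : v ∈ D) (z' : E) :
    ⟪z', v⟫ - ψ v ≤ ⟪z', u⟫ - ψ u + (2 * μ)⁻¹ * ‖z' - z‖ ^ 2 := by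
  have hgap := inner_sub_add_sq_le_of_isMaxOn hψ hu hmax hv
  have hyoung := inner_le_sq_norm_add_sq_norm hμ (z' - z) (v - u)
  rw [inner_sub_left, inner_sub_right, inner_sub_right] at hyoung
  linarith

theorem inner_sub_add_sq_le_of_smoothing_change {φ b : E → ℝ} {γ γ' : ℝ} {u' : E}
    (hψ : StrongConvexOn D μ (fun v => φ v + γ' * b v)) (hu' : u' ∈ D)
    (hmax' : IsMaxOn (fun v => ⟪z, v⟫ - (φ v + γ' * b v)) D u')
    (hmax : IsMaxOn (fun v => ⟪z, v⟫ - (φ v + γ * b v)) D u) (hv : v ∈ D) :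
    ⟪z, v⟫ - (φ v + γ' * b v) + μ / 2 * ‖v - u'‖ ^ 2
      ≤ ⟪z, u⟫ - (φ u + γ * b u) + (γ - γ') * b u' := by
  have hgap := inner_sub_add_sq_le_of_isMaxOn hψ hu' hmax' hv
  have hle := isMaxOn_iff.mp hmax u' hu'
  linarith

end ConjugateOfStronglyConvex

section ProximalStep

variable {H : Type*} [NormedAddCommGroup H] [InnerProductSpace ℝ H] {s : Set H} {g : H → ℝ} {β : ℝ}

theorem strongConvexOn_mul_sq_norm_sub (hs : Convex ℝ s) (m : ℝ) (w : H) :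
    StrongConvexOn s m (fun y => m / 2 * ‖y - w‖ ^ 2) := by
  rw [strongConvexOn_iff_convex]
  have haffine : (fun y => m / 2 * ‖y - w‖ ^ 2 - m / 2 * ‖y‖ ^ 2)
      = fun y => innerₛₗ ℝ (-m • w) y + m / 2 * ‖w‖ ^ 2 := by
    ext y
    rw [norm_sub_sq_real, innerₛₗ_apply_apply, inner_smul_left, real_inner_comm, conj_trivial]
    ring
  rw [haffine]
  exact ((innerₛₗ ℝ (-m • w)).convexOn hs).add_const _

theorem add_sq_norm_sub_add_sq_norm_sub_le_of_isMinOn (hg : ConvexOn ℝ s g) {w q y : H}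
    (hq : q ∈ s) (hmin : IsMinOn (fun y => g y + (2 * β)⁻¹ * ‖y - w‖ ^ 2) s q) (hy : y ∈ s) :
    g q + (2 * β)⁻¹ * ‖q - w‖ ^ 2 + (2 * β)⁻¹ * ‖y - q‖ ^ 2 ≤ g y + (2 * β)⁻¹ * ‖y - w‖ ^ 2 := by
  have hmod : (2 * β)⁻¹ = β⁻¹ / 2 := by rw [mul_inv]; ring
  rw [hmod] at hmin ⊢
  exact add_sq_norm_sub_le_of_isMinOn
    (strongConvexOn_add_of_convexOn hg (strongConvexOn_mul_sq_norm_sub hg.1 β⁻¹ w)) hq hmin hy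

theorem mul_sq_norm_sub_sub_smul (hβ : 0 < β) (y x d : H) :
    (2 * β)⁻¹ * ‖y - (x - β • d)‖ ^ 2
      = (2 * β)⁻¹ * ‖y - x‖ ^ 2 + ⟪y - x, d⟫ + β / 2 * ‖d‖ ^ 2 := by
  rw [sub_sub_eq_add_sub, add_sub_right_comm, norm_add_sq_real, inner_smul_right, norm_smul,
    mul_pow, Real.norm_eq_abs, sq_abs]
  field_simp

theorem inner_add_le_of_isMinOn_prox_step (hg : ConvexOn ℝ s g) (hβ : 0 < β) {x d q y : H}
    (hq : q ∈ s) (hmin : IsMinOn (fun y => g y + (2 * β)⁻¹ * ‖y - (x - β • d)‖ ^ 2) s q)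
    (hy : y ∈ s) :
    ⟪q, d⟫ + g q + (2 * β)⁻¹ * ‖q - x‖ ^ 2
      ≤ ⟪y, d⟫ + g y + (2 * β)⁻¹ * (‖y - x‖ ^ 2 - ‖y - q‖ ^ 2) := by
  have h := add_sq_norm_sub_add_sq_norm_sub_le_of_isMinOn hg hq hmin hy
  rw [mul_sq_norm_sub_sub_smul hβ, mul_sq_norm_sub_sub_smul hβ, inner_sub_left,
    inner_sub_left] at h
  linarith

theorem sq_norm_sub_sub_sq_norm_sub_extrapolation {τ : ℝ} (hτ : τ ≠ 0) {x y xt q xh xt' : H}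
    (hxh : xh = (1 - τ) • x + τ • xt) (hxt' : xt' = xt - τ⁻¹ • (xh - q)) :
    ‖(1 - τ) • x + τ • y - xh‖ ^ 2 - ‖(1 - τ) • x + τ • y - q‖ ^ 2
      = τ ^ 2 * (‖xt - y‖ ^ 2 - ‖xt' - y‖ ^ 2) := by
  have hold : (1 - τ) • x + τ • y - xh = (-τ) • (xt - y) := by rw [hxh]; module
  have hnew : (1 - τ) • x + τ • y - q = (-τ) • (xt' - y) := by
    have : τ • τ⁻¹ • (xh - q) = xh - q := smul_inv_smul₀ hτ _
    calc (1 - τ) • x + τ • y - q = (-τ) • (xt - y) + (xh - q) := by rw [← hold]; abel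
      _ = (-τ) • (xt - y) + τ • τ⁻¹ • (xh - q) := by rw [this]
      _ = (-τ) • (xt' - y) := by rw [hxt']; module
  rw [hold, hnew, norm_smul, norm_smul, mul_pow, mul_pow, Real.norm_eq_abs, sq_abs]
  ring

end ProximalStep

section SmoothedStep

variable {E H : Type*} [NormedAddCommGroup E] [InnerProductSpace ℝ E] [CompleteSpace E]
  [NormedAddCommGroup H] [InnerProductSpace ℝ H] [CompleteSpace H]
  {A : E →L[ℝ] H} {D : Set E} {ψ : E → ℝ} {μ β : ℝ} {s : Set H} {g : H → ℝ} {xh q : H} {u v : E}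

open ContinuousLinearMap (adjoint adjoint_inner_left)

theorem inner_map_sub_le_of_isMaxOn (hμ : 0 < μ) (hβ : 0 < β) (hβμ : ‖A‖ ^ 2 * β ≤ μ)
    (hψ : StrongConvexOn D μ ψ) (hu : u ∈ D)
    (hmax : IsMaxOn (fun v => ⟪adjoint A xh, v⟫ - ψ v) D u) (hv : v ∈ D) (q : H) :
    ⟪q, A v⟫ - ψ v ≤ ⟪q, A u⟫ - ψ u + (2 * β)⁻¹ * ‖q - xh‖ ^ 2 := by
  have hsmooth := inner_sub_le_inner_sub_add_sq_of_isMaxOn hμ hψ hu hmax hv (adjoint A q)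
  have hnorm : ‖adjoint A q - adjoint A xh‖ ≤ ‖A‖ * ‖q - xh‖ := by
    rw [← map_sub, ← LinearIsometryEquiv.norm_map adjoint A]
    exact (adjoint A).le_opNorm _
  have hcurv : (2 * μ)⁻¹ * ‖adjoint A q - adjoint A xh‖ ^ 2 ≤ (2 * β)⁻¹ * ‖q - xh‖ ^ 2 :=
    calc (2 * μ)⁻¹ * ‖adjoint A q - adjoint A xh‖ ^ 2
        ≤ (2 * μ)⁻¹ * (‖A‖ * ‖q - xh‖) ^ 2 := by gcongr
      _ = (2 * μ)⁻¹ * (‖A‖ ^ 2 * β) * (β⁻¹ * ‖q - xh‖ ^ 2) := by field_simp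
      _ ≤ (2 * μ)⁻¹ * μ * (β⁻¹ * ‖q - xh‖ ^ 2) := by gcongr
      _ = (2 * β)⁻¹ * ‖q - xh‖ ^ 2 := by field_simp
  rw [adjoint_inner_left, adjoint_inner_left] at hsmooth
  linarith

theorem inner_map_sub_add_le_of_prox_step (hμ : 0 < μ) (hβ : 0 < β) (hβμ : ‖A‖ ^ 2 * β ≤ μ)
    (hψ : StrongConvexOn D μ ψ) (hu : u ∈ D)
    (hmax : IsMaxOn (fun v => ⟪adjoint A xh, v⟫ - ψ v) D u) (hv : v ∈ D)
    (hg : ConvexOn ℝ s g) (hq : q ∈ s)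
    (hmin : IsMinOn (fun y => g y + (2 * β)⁻¹ * ‖y - (xh - β • A u)‖ ^ 2) s q)
    {y : H} (hy : y ∈ s) :
    ⟪q, A v⟫ - ψ v + g q
      ≤ ⟪y, A u⟫ - ψ u + g y + (2 * β)⁻¹ * (‖y - xh‖ ^ 2 - ‖y - q‖ ^ 2) := by
  have hsmooth := inner_map_sub_le_of_isMaxOn hμ hβ hβμ hψ hu hmax hv q
  have hprox := inner_add_le_of_isMinOn_prox_step hg hβ hq hmin hy
  linarith

theorem inner_map_sub_add_le_of_accelerated_step (hμ : 0 < μ) (hβ : 0 < β) (hβμ : ‖A‖ ^ 2 * β ≤ μ)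
    (hψ : StrongConvexOn D μ ψ) (hu : u ∈ D)
    (hmax : IsMaxOn (fun v => ⟪adjoint A xh, v⟫ - ψ v) D u) (hv : v ∈ D)
    (hg : ConvexOn ℝ s g) (hq : q ∈ s)
    (hmin : IsMinOn (fun y => g y + (2 * β)⁻¹ * ‖y - (xh - β • A u)‖ ^ 2) s q)
    {τ : ℝ} (hτ : τ ∈ Set.Ioc (0 : ℝ) 1) {x y xt xt' : H} (hx : x ∈ s) (hy : y ∈ s)
    (hxh : xh = (1 - τ) • x + τ • xt) (hxt' : xt' = xt - τ⁻¹ • (xh - q)) :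
    ⟪q, A v⟫ - ψ v + g q
      ≤ (1 - τ) * (⟪x, A u⟫ - ψ u + g x) + τ * (⟪y, A u⟫ - ψ u + g y)
        + (2 * β)⁻¹ * (τ ^ 2 * (‖xt - y‖ ^ 2 - ‖xt' - y‖ ^ 2)) := by
  have hτ' : 0 ≤ 1 - τ := sub_nonneg.mpr hτ.2
  have hstep := inner_map_sub_add_le_of_prox_step hμ hβ hβμ hψ hu hmax hv hg hq hmin
    (hg.1 hx hy hτ' hτ.1.le (by ring))
  have hconv := hg.2 hx hy hτ' hτ.1.le (by ring)
  rw [sq_norm_sub_sub_sq_norm_sub_extrapolation hτ.1.ne' hxh hxt', inner_add_left,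
    real_inner_smul_left, real_inner_smul_left] at hstep
  rw [smul_eq_mul, smul_eq_mul] at hconv
  linarith

theorem inner_map_sub_add_le_of_accelerated_step_of_smoothing_change {φ b : E → ℝ} {γ γ' : ℝ}
    (hμ : 0 < μ) (hβ : 0 < β) (hβμ : ‖A‖ ^ 2 * β ≤ μ)
    (hψ : StrongConvexOn D μ (fun v => φ v + γ' * b v))
    {u₀ u' : E} (hu : u ∈ D) (hu' : u' ∈ D) (hv : v ∈ D) {x y xt xt' : H}
    (hmax : IsMaxOn (fun v => ⟪adjoint A xh, v⟫ - (φ v + γ' * b v)) D u)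
    (hmax' : IsMaxOn (fun v => ⟪adjoint A x, v⟫ - (φ v + γ' * b v)) D u')
    (hmax₀ : IsMaxOn (fun v => ⟪adjoint A x, v⟫ - (φ v + γ * b v)) D u₀)
    (hg : ConvexOn ℝ s g) (hq : q ∈ s)
    (hmin : IsMinOn (fun y => g y + (2 * β)⁻¹ * ‖y - (xh - β • A u)‖ ^ 2) s q)
    {τ : ℝ} (hτ : τ ∈ Set.Ioc (0 : ℝ) 1) (hx : x ∈ s) (hy : y ∈ s)
    (hxh : xh = (1 - τ) • x + τ • xt) (hxt' : xt' = xt - τ⁻¹ • (xh - q)) :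
    ⟪q, A v⟫ - (φ v + γ' * b v) + g q
      ≤ (1 - τ) * (⟪x, A u₀⟫ - (φ u₀ + γ * b u₀) + g x) + τ * (⟪y, A u⟫ - φ u + g y)
        + (τ ^ 2 / (2 * β) * (‖xt - y‖ ^ 2 - ‖xt' - y‖ ^ 2)
          - (τ * γ' * b u - (1 - τ) * (γ - γ') * b u' + (1 - τ) * μ / 2 * ‖u' - u‖ ^ 2)) := by
  have hstep := inner_map_sub_add_le_of_accelerated_step hμ hβ hβμ hψ hu hmax hv hg hq hmin hτ
    hx hy hxh hxt'
  have hchange := mul_le_mul_of_nonneg_left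
    (inner_sub_add_sq_le_of_smoothing_change hψ hu' hmax' hmax₀ hu) (sub_nonneg.mpr hτ.2)
  rw [adjoint_inner_left, adjoint_inner_left, norm_sub_rev u u'] at hchange
  have hcoef : τ ^ 2 / (2 * β) = (2 * β)⁻¹ * τ ^ 2 := by ring
  rw [hcoef]
  linarith

end SmoothedStep

section ExtendedReal

variable {H : Type*} [NormedAddCommGroup H] {g : H → EReal} {β : ℝ} {w q : H}

/-- Convexity of an extended-real-valued function, stated by Jensen's inequality because `EReal`
is not a real module, so that `ConvexOn` does not apply. By the convention `0 * ⊤ = 0`, a point of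
weight zero imposes nothing. -/
def EConvex {E : Type*} [AddCommMonoid E] [Module ℝ E] (φ : E → EReal) : Prop :=
  ∀ v w : E, ∀ a c : ℝ, 0 ≤ a → 0 ≤ c → a + c = 1 →
    φ (a • v + c • w) ≤ (a : EReal) * φ v + (c : EReal) * φ w

/-- The effective domain of a convex function; where `φ` also avoids `⊥`, it is the set on which
`φ` is real-valued. -/
def effDom {E : Type*} (φ : E → EReal) : Set E := {v | φ v ≠ ⊤}

/-- `u` solves the smoothed problem `max_{v ∈ U} ⟪z, v⟫ - φ v - γ b(v)` with finite value, i.e.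
`u = u*_γ(z)`. -/
structure IsSmoothedMaximizer {E : Type*} [NormedAddCommGroup E] [InnerProductSpace ℝ E]
    (U : Set E) (φ : E → EReal) (b : E → ℝ) (γ : ℝ) (z u : E) : Prop where
  mem : u ∈ U
  ne_top : φ u ≠ ⊤
  le : ∀ v ∈ U, (⟪z, v⟫ : EReal) - φ v - ((γ * b v : ℝ) : EReal)
    ≤ (⟪z, u⟫ : EReal) - φ u - ((γ * b u : ℝ) : EReal)

/-- `q` is a proximal point of `g` at `w` with step `β`, i.e. `q = prox_{βg}(w)`. -/
def IsProx (g : H → EReal) (β : ℝ) (w q : H) : Prop :=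
  ∀ y, g q + (((2 * β)⁻¹ * ‖q - w‖ ^ 2 : ℝ) : EReal)
    ≤ g y + (((2 * β)⁻¹ * ‖y - w‖ ^ 2 : ℝ) : EReal)

theorem EConvex.convexOn_toReal {E : Type*} [AddCommMonoid E] [Module ℝ E] {φ : E → EReal}
    (hφ : EConvex φ) (hbot : ∀ v, φ v ≠ ⊥) : ConvexOn ℝ (effDom φ) (fun v => (φ v).toReal) := by
  have jensen : ∀ v ∈ effDom φ, ∀ w ∈ effDom φ, ∀ a c : ℝ, 0 ≤ a → 0 ≤ c → a + c = 1 →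
      φ (a • v + c • w) ≤ ((a * (φ v).toReal + c * (φ w).toReal : ℝ) : EReal) := by
    intro v hv w hw a c ha hc hac
    rw [EReal.coe_add, EReal.coe_mul, EReal.coe_mul, EReal.coe_toReal hv (hbot v),
      EReal.coe_toReal hw (hbot w)]
    exact hφ v w a c ha hc hac
  refine ⟨fun v hv w hw a c ha hc hac => ?_, fun v hv w hw a c ha hc hac => ?_⟩
  · exact ne_top_of_le_ne_top (EReal.coe_ne_top _) (jensen v hv w hw a c ha hc hac)
  · exact EReal.toReal_le_toReal (jensen v hv w hw a c ha hc hac) (hbot _) (EReal.coe_ne_top _)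

theorem EConvex.strongConvexOn_toReal_add_mul {E : Type*} [NormedAddCommGroup E]
    [NormedSpace ℝ E] {φ : E → EReal} (hφ : EConvex φ) (hbot : ∀ v, φ v ≠ ⊥) {U : Set E}
    {b : E → ℝ} {m γ : ℝ} (hb : StrongConvexOn U m b) (hγ : 0 ≤ γ) :
    StrongConvexOn (U ∩ effDom φ) (γ * m) (fun v => (φ v).toReal + γ * b v) := by
  have hφr := hφ.convexOn_toReal hbot
  have hconv : Convex ℝ (U ∩ effDom φ) := hb.1.inter hφr.1
  exact strongConvexOn_add_of_convexOn (hφr.subset Set.inter_subset_right hconv)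
    (strongConvexOn_const_mul hγ (strongConvexOn_subset hb Set.inter_subset_left hconv))

theorem IsSmoothedMaximizer.isMaxOn_toReal {E : Type*} [NormedAddCommGroup E]
    [InnerProductSpace ℝ E] {U : Set E} {φ : E → EReal} {b : E → ℝ} {γ : ℝ} {z u : E}
    (h : IsSmoothedMaximizer U φ b γ z u) (hbot : ∀ v, φ v ≠ ⊥) :
    IsMaxOn (fun v => ⟪z, v⟫ - ((φ v).toReal + γ * b v)) (U ∩ effDom φ) u := by
  refine isMaxOn_iff.mpr fun v ⟨hvU, hvφ⟩ => ?_
  have hle := h.le v hvU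
  rw [← EReal.coe_toReal hvφ (hbot v), ← EReal.coe_toReal h.ne_top (hbot u)] at hle
  norm_cast at hle
  linarith

theorem IsProx.mem_effDom {y : H} (h : IsProx g β w q) (hy : y ∈ effDom g) : q ∈ effDom g := by
  refine fun hq => absurd (h y) ?_
  rw [hq, EReal.top_add_coe, top_le_iff]
  exact EReal.add_ne_top hy (EReal.coe_ne_top _)

theorem IsProx.isMinOn_toReal (h : IsProx g β w q) (hbot : ∀ y, g y ≠ ⊥) :
    IsMinOn (fun y => (g y).toReal + (2 * β)⁻¹ * ‖y - w‖ ^ 2) (effDom g) q := by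
  refine isMinOn_iff.mpr fun y hy => ?_
  have hle := h y
  rw [← EReal.coe_toReal hy (hbot y),
    ← EReal.coe_toReal (h.mem_effDom hy) (hbot q)] at hle
  exact_mod_cast hle

theorem coe_sub_toReal_le_iSup {E : Type*} {U : Set E} {φ : E → EReal} (ℓ : E → ℝ) {u : E}
    (hu : u ∈ U ∩ effDom φ) (hbot : φ u ≠ ⊥) :
    ((ℓ u - (φ u).toReal : ℝ) : EReal) ≤ ⨆ v ∈ U, ((ℓ v : EReal) - φ v) := by
  rw [EReal.coe_sub, EReal.coe_toReal hu.2 hbot]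
  exact le_iSup₂ (f := fun v (_ : v ∈ U) => (ℓ v : EReal) - φ v) u hu.1

theorem coe_le_add_mul_add_of_ne_top {a d c l τ : ℝ} {s t : EReal} (hτ : 0 < τ)
    (hs : (l : EReal) ≤ s) (ht : t ≠ ⊥) (h : t ≠ ⊤ → a ≤ d + τ * (l + t.toReal) + c) :
    (a : EReal) ≤ d + τ * (s + t) + c := by
  have hmono : (d : EReal) + τ * (l + t) + c ≤ d + τ * (s + t) + c := by
    have : (0 : EReal) ≤ τ := by exact_mod_cast hτ.le
    gcongr
  refine le_trans ?_ hmono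
  rcases eq_or_ne t ⊤ with rfl | htop
  · rw [EReal.coe_add_top, EReal.coe_mul_top_of_pos hτ, EReal.coe_add_top, EReal.top_add_coe]
    exact le_top
  · rw [← EReal.coe_toReal htop ht]
    exact_mod_cast h htop

end ExtendedReal

theorem stmt_10_general {E H : Type*} [NormedAddCommGroup E] [InnerProductSpace ℝ E]
    [CompleteSpace E] [NormedAddCommGroup H] [InnerProductSpace ℝ H] [CompleteSpace H]
    {U : Set E} {φ : E → EReal} (hφbot : ∀ v, φ v ≠ ⊥) (hφ : EConvex φ)
    {b : E → ℝ} (hb : StrongConvexOn U 1 b) {ustar : ℝ → E → E}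
    (hustar : ∀ γ > 0, ∀ z, IsSmoothedMaximizer U φ b γ z (ustar γ z)) {φs : ℝ → E → ℝ}
    (hφs : ∀ γ z, φs γ z = ⟪z, ustar γ z⟫ - (φ (ustar γ z)).toReal - γ * b (ustar γ z))
    (A : E →L[ℝ] H) {f : H → EReal} (hf : ∀ x, f x = ⨆ v ∈ U, ((⟪x, A v⟫ : EReal) - φ v))
    {g : H → EReal} (hgbot : ∀ y, g y ≠ ⊥) (hg : EConvex g)
    {τ γ γ' β : ℝ} (hτ : τ ∈ Set.Ioc (0 : ℝ) 1) (hγ : 0 < γ) (hγ' : 0 < γ')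
    (hβ : 0 < β) (hβγ' : ‖A‖ ^ 2 * β ≤ γ') {xk xt xh q xt' : H} (hxk : g xk ≠ ⊤)
    (hxh : xh = (1 - τ) • xk + τ • xt)
    (hq : IsProx g β (xh - β • A (ustar γ' (A.adjoint xh))) q)
    (hxt' : xt' = xt - τ⁻¹ • (xh - q)) {R : ℝ}
    (hR : R = τ * γ' * b (ustar γ' (A.adjoint xh))
      - (1 - τ) * (γ - γ') * b (ustar γ' (A.adjoint xk))
      + (1 - τ) * γ' / 2 * ‖ustar γ' (A.adjoint xk) - ustar γ' (A.adjoint xh)‖ ^ 2) (x : H) :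
    (φs γ' (A.adjoint q) : EReal) + g q
      ≤ ((1 - τ : ℝ) : EReal) * ((φs γ (A.adjoint xk) : EReal) + g xk) + (τ : EReal) * (f x + g x)
        + ((τ ^ 2 / (2 * β) * (‖xt - x‖ ^ 2 - ‖xt' - x‖ ^ 2) - R : ℝ) : EReal) := by
  have hmem {γ : ℝ} (hγ : 0 < γ) (z : E) : ustar γ z ∈ U ∩ effDom φ :=
    ⟨(hustar γ hγ z).mem, (hustar γ hγ z).ne_top⟩
  have hmax {γ : ℝ} (hγ : 0 < γ) (z : E) := (hustar γ hγ z).isMaxOn_toReal hφbot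
  have hψ : StrongConvexOn (U ∩ effDom φ) γ' (fun v => (φ v).toReal + γ' * b v) := by
    simpa only [mul_one] using hφ.strongConvexOn_toReal_add_mul hφbot hb hγ'.le
  have hqdom := hq.mem_effDom hxk
  have hfx : ((⟪x, A (ustar γ' (A.adjoint xh))⟫ - (φ (ustar γ' (A.adjoint xh))).toReal : ℝ)
      : EReal) ≤ f x :=
    hf x ▸ coe_sub_toReal_le_iSup (fun v => ⟪x, A v⟫) (hmem hγ' _) (hφbot _)
  rw [← EReal.coe_toReal hqdom (hgbot q), ← EReal.coe_toReal hxk (hgbot xk)]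
  norm_cast
  refine coe_le_add_mul_add_of_ne_top hτ.1 hfx (hgbot x) fun hgx => ?_
  have hstep := inner_map_sub_add_le_of_accelerated_step_of_smoothing_change hγ' hβ hβγ' hψ
    (hmem hγ' _) (hmem hγ' _) (hmem hγ' (A.adjoint q)) (hmax hγ' _) (hmax hγ' _) (hmax hγ _)
    (hg.convexOn_toReal hgbot) hqdom (hq.isMinOn_toReal hgbot) hτ hxk hgx hxh hxt'
  simpa only [hφs, hR, sub_sub, ContinuousLinearMap.adjoint_inner_left] using hstep

theorem stmt_10
    {n : ℕ} (hn : 1 ≤ n)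
    (U : Set (EuclideanSpace ℝ (Fin n)))
    (hUne : U.Nonempty) (hUcl : IsClosed U) (hUcx : Convex ℝ U)
    (φ : EuclideanSpace ℝ (Fin n) → EReal)
    (hφbot : ∀ v, φ v ≠ ⊥)
    (hφlsc : LowerSemicontinuous φ)
    (hφcx : ∀ v w : EuclideanSpace ℝ (Fin n), ∀ a c : ℝ, 0 ≤ a → 0 ≤ c → a + c = 1 →
      φ (a • v + c • w) ≤ (a : EReal) * φ v + (c : EReal) * φ w)
    (hφdom : ∃ v ∈ U, φ v ≠ ⊤)
    (b : EuclideanSpace ℝ (Fin n) → ℝ)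
    (hbcont : Continuous b)
    (hbsc : StrongConvexOn U 1 b)
    (ustar : ℝ → EuclideanSpace ℝ (Fin n) → EuclideanSpace ℝ (Fin n))
    (humem : ∀ γ > (0:ℝ), ∀ z, ustar γ z ∈ U)
    (hufin : ∀ γ > (0:ℝ), ∀ z, φ (ustar γ z) ≠ ⊤)
    (humax : ∀ γ > (0:ℝ), ∀ z, ∀ v ∈ U,
      (⟪z, v⟫ : EReal) - φ v - ((γ * b v : ℝ) : EReal)
        ≤ (⟪z, ustar γ z⟫ : EReal) - φ (ustar γ z) - ((γ * b (ustar γ z) : ℝ) : EReal))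
    (φs : ℝ → EuclideanSpace ℝ (Fin n) → ℝ)
    (hφs : ∀ γ z, φs γ z = ⟪z, ustar γ z⟫ - (φ (ustar γ z)).toReal - γ * b (ustar γ z))
    {p : ℕ} (hp : 1 ≤ p)
    (A : EuclideanSpace ℝ (Fin n) →L[ℝ] EuclideanSpace ℝ (Fin p))
    (hAnorm : 0 < ‖A‖)
    (f : EuclideanSpace ℝ (Fin p) → EReal)
    (hf : ∀ x, f x = ⨆ v ∈ U, ((⟪x, A v⟫ : EReal) - φ v))
    (g : EuclideanSpace ℝ (Fin p) → EReal)
    (hgbot : ∀ y, g y ≠ ⊥)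
    (hgdom : ∃ y, g y ≠ ⊤)
    (hglsc : LowerSemicontinuous g)
    (hgcx : ∀ y w : EuclideanSpace ℝ (Fin p), ∀ a c : ℝ, 0 ≤ a → 0 ≤ c → a + c = 1 →
      g (a • y + c • w) ≤ (a : EReal) * g y + (c : EReal) * g w)
    (prox : ℝ → EuclideanSpace ℝ (Fin p) → EuclideanSpace ℝ (Fin p))
    (hprox : ∀ β > (0:ℝ), ∀ x y,
      g (prox β x) + (((2*β)⁻¹ * ‖prox β x - x‖^2 : ℝ) : EReal)
        ≤ g y + (((2*β)⁻¹ * ‖y - x‖^2 : ℝ) : EReal))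
    (hproxu : ∀ β > (0:ℝ), ∀ x y,
      (∀ w, g y + (((2*β)⁻¹ * ‖y - x‖^2 : ℝ) : EReal)
          ≤ g w + (((2*β)⁻¹ * ‖w - x‖^2 : ℝ) : EReal)) → y = prox β x)
    (τk γk γk1 : ℝ) (hτk : τk ∈ Set.Ioc (0:ℝ) 1) (hγk : 0 < γk) (hγk1 : 0 < γk1)
    (xk xtk : EuclideanSpace ℝ (Fin p)) (hxkdom : g xk ≠ ⊤)
    (xhk xk1 xtk1 : EuclideanSpace ℝ (Fin p))
    (hxhk : xhk = (1 - τk) • xk + τk • xtk)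
    (hxk1 : xk1 = prox (γk1/‖A‖^2) (xhk - (γk1/‖A‖^2) • A (ustar γk1 ((ContinuousLinearMap.adjoint A) xhk))))
    (hxtk1 : xtk1 = xtk - τk⁻¹ • (xhk - xk1))
    (Rk : ℝ)
    (hRk : Rk = τk * γk1 * b (ustar γk1 ((ContinuousLinearMap.adjoint A) xhk))
        - (1 - τk) * (γk - γk1) * b (ustar γk1 ((ContinuousLinearMap.adjoint A) xk))
        + ((1 - τk) * γk1 / 2) * ‖ustar γk1 ((ContinuousLinearMap.adjoint A) xk) - ustar γk1 ((ContinuousLinearMap.adjoint A) xhk)‖^2)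
    :
    ∀ x : EuclideanSpace ℝ (Fin p),
      ((φs γk1 ((ContinuousLinearMap.adjoint A) xk1) : ℝ) : EReal) + g xk1
        ≤ ((1 - τk : ℝ) : EReal) * (((φs γk ((ContinuousLinearMap.adjoint A) xk) : ℝ) : EReal) + g xk)
          + ((τk : ℝ) : EReal) * (f x + g x)
          + ((‖A‖^2 * τk^2 / (2*γk1) * (‖xtk - x‖^2 - ‖xtk1 - x‖^2) - Rk : ℝ) : EReal) := by
  have hcoef : τk ^ 2 / (2 * (γk1 / ‖A‖ ^ 2)) = ‖A‖ ^ 2 * τk ^ 2 / (2 * γk1) := by field_simp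
  exact hcoef ▸ stmt_10_general hφbot hφcx hbsc
    (fun γ hγ z => ⟨humem γ hγ z, hufin γ hγ z, humax γ hγ z⟩) hφs A hf hgbot hgcx hτk hγk hγk1
    (by positivity) (mul_div_cancel₀ γk1 (by positivity)).le hxkdom hxhk
    (hxk1 ▸ hprox _ (by positivity) _) hxtk1 hRk
end

section
/- Run the full-gradient variant of the algorithm. Then for every k ≥ 1: F(x^k) − F* ≤ (3L_g/(2k))·‖x⁰ − x*‖² + (‖A‖²/(L_g·k))·(2L_b/L_g + 1)·D_U + ((L_b − 1)·‖A‖²/(L_g²·k))·(ln k + 1)·D_U. -/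
open scoped RealInnerProductSpace BigOperators

/-!
On the domain of `φ`, where `0 ≤ b ≤ D`, the smoothing satisfies `f_γ ≤ f ≤ f_γ + γ D`. Strong
convexity of `b` makes the gradient of `f_γ` Lipschitz with constant `‖A‖² / γ`, so the surrogate
`H_γ = f_γ + g` satisfies the descent lemma with constant `L + ‖A‖² / γ`. The recursion for the
smoothness parameters solves to `γ_k = ‖A‖² / (L (2k - 1))`, which turns this constant into `2 L k`.
For a comparison point `y` with value `c = f(y) + g(y)`, the potential
`V_k = k (H_{γ_k}(x_k) - c) + L ‖x̃_k - y‖²` then obeys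
`V_{k+1} ≤ V_k + b(u_k) (k γ_k - (k + 1) γ_{k+1})`. Since `k γ_k` decreases for `k ≥ 1`, the errors
telescope to `V_k + k γ_k D ≤ L ‖x₀ - y‖² + γ₁ D`, and dividing by `k` gives the rate
`(L ‖x₀ - y‖² + ‖A‖² D / L) / k`.
-/

section FirstOrder

variable {F : Type*} [NormedAddCommGroup F] [InnerProductSpace ℝ F] [CompleteSpace F]
  {g : F → ℝ} {g' : F → F} {x y v : F} {S : Set F}

lemma hasDerivAt_comp_lineMap_of_hasGradientAt {t : ℝ}
    (h : HasGradientAt g v (AffineMap.lineMap x y t)) :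
    HasDerivAt (fun s : ℝ ↦ g (AffineMap.lineMap x y s)) ⟪v, y - x⟫ t :=
  (h.hasFDerivAt.comp_hasDerivAt t AffineMap.hasDerivAt_lineMap).congr_deriv (by simp)

lemma add_inner_gradient_le_of_convexOn (hg : ConvexOn ℝ S g) (hx : x ∈ S) (hy : y ∈ S)
    (hv : HasGradientAt g v x) : g x + ⟪v, y - x⟫ ≤ g y := by
  have hconv := hg.comp_affineMap (AffineMap.lineMap x y : ℝ →ᵃ[ℝ] F)
  have hderiv : HasDerivAt (g ∘ AffineMap.lineMap x y) ⟪v, y - x⟫ (0 : ℝ) :=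
    hasDerivAt_comp_lineMap_of_hasGradientAt (by simpa using hv)
  have hslope := hconv.le_slope_of_hasDerivAt (x := 0) (y := 1) (by simpa) (by simpa) one_pos hderiv
  simp only [slope_def_field, Function.comp_apply, AffineMap.lineMap_apply_zero,
    AffineMap.lineMap_apply_one, sub_zero, div_one] at hslope
  linarith

lemma le_add_inner_gradient_add_sq_of_lipschitzWith {L : NNReal}
    (hg : ∀ z, HasGradientAt g (g' z) z) (hlip : LipschitzWith L g') (x y : F) :
    g y ≤ g x + ⟪g' x, y - x⟫ + L / 2 * ‖y - x‖ ^ 2 := by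
  have hline (t : ℝ) : HasDerivAt (fun s : ℝ ↦ g (AffineMap.lineMap x y s))
      ⟪g' (AffineMap.lineMap x y t), y - x⟫ t := hasDerivAt_comp_lineMap_of_hasGradientAt (hg _)
  have hquad (t : ℝ) : HasDerivAt
      (fun s : ℝ ↦ g x + s * ⟪g' x, y - x⟫ + L / 2 * ‖y - x‖ ^ 2 * s ^ 2)
      (⟪g' x, y - x⟫ + L * t * ‖y - x‖ ^ 2) t := by
    refine ((((hasDerivAt_id' t).mul_const ⟪g' x, y - x⟫).const_add (g x)).add
      ((hasDerivAt_pow 2 t).const_mul (L / 2 * ‖y - x‖ ^ 2))).congr_deriv ?_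
    push_cast
    ring
  have hderiv_le (t : ℝ) (ht : 0 ≤ t) : ⟪g' (AffineMap.lineMap x y t), y - x⟫
      ≤ ⟪g' x, y - x⟫ + L * t * ‖y - x‖ ^ 2 := by
    have hdist := hlip.dist_le_mul (AffineMap.lineMap x y t) x
    rw [dist_lineMap_left, dist_eq_norm, Real.norm_of_nonneg ht, dist_comm x y, dist_eq_norm]
      at hdist
    rw [← sub_le_iff_le_add', ← inner_sub_left]
    calc ⟪g' (AffineMap.lineMap x y t) - g' x, y - x⟫
        ≤ ‖g' (AffineMap.lineMap x y t) - g' x‖ * ‖y - x‖ := real_inner_le_norm _ _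
      _ ≤ L * (t * ‖y - x‖) * ‖y - x‖ := by gcongr
      _ = L * t * ‖y - x‖ ^ 2 := by ring
  have hcomp := image_le_of_deriv_right_le_deriv_boundary (a := (0 : ℝ)) (b := 1)
    (fun t _ ↦ (hline t).continuousAt.continuousWithinAt) (fun t _ ↦ (hline t).hasDerivWithinAt)
    (by simp) (fun t _ ↦ (hquad t).continuousAt.continuousWithinAt)
    (fun t _ ↦ (hquad t).hasDerivWithinAt) (fun t ht ↦ hderiv_le t ht.1)
    (Set.right_mem_Icc.2 zero_le_one)
  simpa using hcomp

end FirstOrder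

section StrongConvexity

lemma add_sq_le_of_isMaxOn_of_strongConcaveOn {E : Type*} [NormedAddCommGroup E]
    [NormedSpace ℝ E] {S : Set E} {m : ℝ} {h : E → ℝ} {u v : E} (hh : StrongConcaveOn S m h)
    (hu : u ∈ S) (hv : v ∈ S) (hmax : IsMaxOn h S u) : h v + m / 2 * ‖v - u‖ ^ 2 ≤ h u := by
  have hsegment : ∀ᶠ t in nhdsWithin (0 : ℝ) (Set.Ioi 0),
      h v + (1 - t) * (m / 2 * ‖v - u‖ ^ 2) ≤ h u := by
    filter_upwards [Ioo_mem_nhdsGT one_pos] with t ⟨ht0, ht1⟩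
    have hconc := hh.2 hv hu ht0.le (sub_nonneg.2 ht1.le) (by ring)
    have hle : h _ ≤ h u := hmax (hh.1 hv hu ht0.le (sub_nonneg.2 ht1.le) (by ring))
    simp only [smul_eq_mul] at hconc
    refine le_of_mul_le_mul_left ?_ ht0
    linarith
  have hlim : Filter.Tendsto (fun t : ℝ ↦ h v + (1 - t) * (m / 2 * ‖v - u‖ ^ 2))
      (nhdsWithin 0 (Set.Ioi 0)) (nhds (h v + (1 - 0) * (m / 2 * ‖v - u‖ ^ 2))) :=
    (Continuous.tendsto (by fun_prop) 0).mono_left nhdsWithin_le_nhds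
  simpa using le_of_tendsto hlim hsegment

lemma strongConvexOn_add_const_mul {E : Type*} [NormedAddCommGroup E] [NormedSpace ℝ E]
    {S : Set E} {m γ : ℝ} {r b : E → ℝ} (hr : ConvexOn ℝ S r) (hb : StrongConvexOn S m b)
    (hγ : 0 ≤ γ) : StrongConvexOn S (γ * m) (fun v ↦ r v + γ * b v) := by
  refine ⟨hr.1, fun v hv w hw s t hs ht hst ↦ ?_⟩
  have hrvw := hr.2 hv hw hs ht hst
  have hbvw := mul_le_mul_of_nonneg_left (hb.2 hv hw hs ht hst) hγ
  simp only [smul_eq_mul] at hrvw hbvw ⊢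
  linarith

variable {E : Type*} [NormedAddCommGroup E] [InnerProductSpace ℝ E]

lemma strongConcaveOn_inner_sub {S : Set E} {m : ℝ} {h : E → ℝ} (hh : StrongConvexOn S m h)
    (z : E) : StrongConcaveOn S m (fun v ↦ ⟪z, v⟫ - h v) := by
  have hlin : UniformConcaveOn S 0 (fun v ↦ ⟪z, v⟫) :=
    uniformConcaveOn_zero.2 ((innerSL ℝ z).toLinearMap.concaveOn hh.1)
  exact (hlin.sub hh).mono (zero_add _).ge

-- Quadratic growth at `u` pays for the cross term `⟪v - u, w - z⟫` by Young's inequality.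
lemma inner_sub_le_of_isMaxOn_of_strongConvexOn {S : Set E} {m : ℝ} {h : E → ℝ} {u v z : E}
    (hm : 0 < m) (hh : StrongConvexOn S m h) (hu : u ∈ S) (hv : v ∈ S)
    (hmax : IsMaxOn (fun v ↦ ⟪z, v⟫ - h v) S u) (w : E) :
    ⟪w, v⟫ - h v ≤ ⟪z, u⟫ - h u + ⟪u, w - z⟫ + ‖w - z‖ ^ 2 / (2 * m) := by
  have hgrowth :=
    add_sq_le_of_isMaxOn_of_strongConcaveOn (strongConcaveOn_inner_sub hh z) hu hv hmax
  have hsplit : ⟪w, v⟫ = ⟪z, v⟫ + ⟪u, w - z⟫ + ⟪v - u, w - z⟫ := by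
    simp only [inner_sub_left, inner_sub_right, real_inner_comm]
    ring
  have hyoung : ⟪v - u, w - z⟫ ≤ m / 2 * ‖v - u‖ ^ 2 + ‖w - z‖ ^ 2 / (2 * m) := by
    have hsq : m / 2 * ‖v - u‖ ^ 2 + ‖w - z‖ ^ 2 / (2 * m) - ‖v - u‖ * ‖w - z‖
        = (m * ‖v - u‖ - ‖w - z‖) ^ 2 / (2 * m) := by
      field_simp
      ring
    have hnonneg : 0 ≤ (m * ‖v - u‖ - ‖w - z‖) ^ 2 / (2 * m) := by positivity
    linarith [real_inner_le_norm (v - u) (w - z)]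
  linarith

end StrongConvexity

section Smoothing

variable {E : Type*} [NormedAddCommGroup E] [InnerProductSpace ℝ E]

/-- The objective `⟨z, v⟩ - r v - γ b v` whose maximum over `v` is the conjugate of `r` at `z`,
smoothed with prox-function `b` and smoothness parameter `γ`. -/
def proxObjective (r b : E → ℝ) (γ : ℝ) (z v : E) : ℝ :=
  ⟪z, v⟫ - r v - γ * b v

/-- `u γ z` is a maximizer over `S` of the smoothed conjugate problem, the paper's `u*_γ(z)`. The
constraint `v ∈ U` and the finiteness of the extended-valued `φ` are both absorbed in `S`. -/
structure IsProxMap (S : Set E) (r b : E → ℝ) (u : ℝ → E → E) : Prop where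
  mem : ∀ γ > 0, ∀ z, u γ z ∈ S
  isMaxOn : ∀ γ > 0, ∀ z, IsMaxOn (proxObjective r b γ z) S (u γ z)

/-- The smoothed conjugate `φ*_γ(z)`, evaluated through the maximizer `u γ z`. -/
def smoothedConjugate (r b : E → ℝ) (u : ℝ → E → E) (γ : ℝ) (z : E) : ℝ :=
  proxObjective r b γ z (u γ z)

variable {S : Set E} {r b : E → ℝ} {u : ℝ → E → E} {γ δ : ℝ}

lemma proxObjective_eq_add_inner_add (r b : E → ℝ) (γ δ : ℝ) (z w v : E) :
    proxObjective r b δ w v = proxObjective r b γ z v + ⟪v, w - z⟫ + (γ - δ) * b v := by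
  simp only [proxObjective, inner_sub_right, real_inner_comm v]
  ring

lemma IsProxMap.smoothedConjugate_le (hu : IsProxMap S r b u) (hr : ConvexOn ℝ S r)
    (hb : StrongConvexOn S 1 b) (hγ : 0 < γ) (z w : E) :
    smoothedConjugate r b u γ w
      ≤ smoothedConjugate r b u γ z + ⟪u γ z, w - z⟫ + ‖w - z‖ ^ 2 / (2 * γ) := by
  have hregularized : StrongConvexOn S γ (fun v ↦ r v + γ * b v) := by
    simpa only [mul_one] using strongConvexOn_add_const_mul hr hb hγ.le
  have hmax : IsMaxOn (fun v ↦ ⟪z, v⟫ - (r v + γ * b v)) S (u γ z) := by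
    simpa only [isMaxOn_iff, proxObjective, sub_sub] using hu.isMaxOn γ hγ z
  simpa only [smoothedConjugate, proxObjective, sub_sub] using
    inner_sub_le_of_isMaxOn_of_strongConvexOn hγ hregularized (hu.mem γ hγ z) (hu.mem γ hγ w)
      hmax w

variable {F : Type*} [NormedAddCommGroup F] [InnerProductSpace ℝ F] [CompleteSpace E]
  [CompleteSpace F] {A : E →L[ℝ] F} {g : F → ℝ} {g' : F → F} {L : ℝ}

/-- The smoothed composite objective `f_γ + g`, with `f_γ(y) = φ*_γ(Aᵀ y)`. -/
noncomputable def smoothedObjective (A : E →L[ℝ] F) (r b : E → ℝ) (u : ℝ → E → E) (g : F → ℝ)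
    (γ : ℝ) (y : F) : ℝ :=
  smoothedConjugate r b u γ (A.adjoint y) + g y

/-- The gradient `∇g(y) + A u*_γ(Aᵀ y)` of the smoothed composite objective. -/
noncomputable def smoothedGradient (A : E →L[ℝ] F) (u : ℝ → E → E) (g' : F → F) (γ : ℝ) (y : F) :
    F :=
  g' y + A (u γ (A.adjoint y))

lemma IsProxMap.smoothedObjective_le (hu : IsProxMap S r b u) (hr : ConvexOn ℝ S r)
    (hb : StrongConvexOn S 1 b) (hL : 0 ≤ L) (hg : ∀ y, HasGradientAt g (g' y) y)
    (hlip : LipschitzWith L.toNNReal g') (hγ : 0 < γ) (x y : F) :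
    smoothedObjective A r b u g γ y ≤ smoothedObjective A r b u g γ x
      + ⟪smoothedGradient A u g' γ x, y - x⟫ + (L + ‖A‖ ^ 2 / γ) / 2 * ‖y - x‖ ^ 2 := by
  have hsmooth := hu.smoothedConjugate_le hr hb hγ (A.adjoint x) (A.adjoint y)
  have hdescent := le_add_inner_gradient_add_sq_of_lipschitzWith hg hlip x y
  rw [← map_sub, A.adjoint_inner_right] at hsmooth
  rw [Real.coe_toNNReal L hL] at hdescent
  have hnorm : ‖A.adjoint (y - x)‖ ^ 2 / (2 * γ) ≤ ‖A‖ ^ 2 / γ / 2 * ‖y - x‖ ^ 2 := by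
    calc ‖A.adjoint (y - x)‖ ^ 2 / (2 * γ) ≤ (‖A‖ * ‖y - x‖) ^ 2 / (2 * γ) := by
          gcongr
          simpa only [LinearIsometryEquiv.norm_map] using A.adjoint.le_opNorm (y - x)
      _ = ‖A‖ ^ 2 / γ / 2 * ‖y - x‖ ^ 2 := by ring
  simp only [smoothedObjective, smoothedGradient, inner_add_left]
  linarith

lemma smoothedObjective_add_inner_le_proxObjective (hgc : ConvexOn ℝ Set.univ g)
    (hg : ∀ y, HasGradientAt g (g' y) y) (γ δ : ℝ) (x y : F) :
    smoothedObjective A r b u g γ x + ⟪smoothedGradient A u g' γ x, y - x⟫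
        + (γ - δ) * b (u γ (A.adjoint x))
      ≤ proxObjective r b δ (A.adjoint y) (u γ (A.adjoint x)) + g y := by
  have hconvex := add_inner_gradient_le_of_convexOn hgc (Set.mem_univ x) (Set.mem_univ y) (hg x)
  rw [proxObjective_eq_add_inner_add r b γ δ (A.adjoint x), ← map_sub, A.adjoint_inner_right]
  simp only [smoothedObjective, smoothedGradient, smoothedConjugate, inner_add_left]
  linarith

lemma IsProxMap.smoothedObjective_add_inner_le (hu : IsProxMap S r b u)
    (hgc : ConvexOn ℝ Set.univ g) (hg : ∀ y, HasGradientAt g (g' y) y) (hγ : 0 < γ) (hδ : 0 < δ)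
    (x y : F) :
    smoothedObjective A r b u g γ x + ⟪smoothedGradient A u g' γ x, y - x⟫
        + (γ - δ) * b (u γ (A.adjoint x))
      ≤ smoothedObjective A r b u g δ y :=
  (smoothedObjective_add_inner_le_proxObjective hgc hg γ δ x y).trans
    (add_le_add_left (hu.isMaxOn δ hδ _ (hu.mem γ hγ _)) _)

-- The tangent bound at smoothness parameter `δ = 0`, where the maximizer need not exist.
lemma IsProxMap.smoothedObjective_add_inner_le_of_forall_le {y : F} {c : ℝ}
    (hu : IsProxMap S r b u) (hgc : ConvexOn ℝ Set.univ g) (hg : ∀ y, HasGradientAt g (g' y) y)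
    (hγ : 0 < γ) (hy : ∀ v ∈ S, ⟪y, A v⟫ - r v + g y ≤ c) (x : F) :
    smoothedObjective A r b u g γ x + ⟪smoothedGradient A u g' γ x, y - x⟫
      + γ * b (u γ (A.adjoint x)) ≤ c := by
  have htangent := smoothedObjective_add_inner_le_proxObjective (A := A) (r := r) (b := b) (u := u)
    hgc hg γ 0 x y
  rw [proxObjective, A.adjoint_inner_left, sub_zero, zero_mul, sub_zero] at htangent
  exact htangent.trans (hy _ (hu.mem γ hγ _))

lemma IsProxMap.le_smoothedObjective_add {D : ℝ} {v : E} (hu : IsProxMap S r b u) (hγ : 0 < γ)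
    (hv : v ∈ S) (hD : b v ≤ D) (y : F) :
    ⟪y, A v⟫ - r v + g y ≤ smoothedObjective A r b u g γ y + γ * D := by
  have hmax : proxObjective r b γ (A.adjoint y) v ≤ smoothedConjugate r b u γ (A.adjoint y) :=
    hu.isMaxOn γ hγ _ hv
  rw [proxObjective, A.adjoint_inner_left] at hmax
  have hbound := mul_le_mul_of_nonneg_left hD hγ.le
  simp only [smoothedObjective]
  linarith

end Smoothing

section Acceleration

-- The coupling `x̂ = (1 - τ) x + τ x̃` recombines the two linearizations into `Fh + τ ⟪d, y - x̃⟫`.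
lemma accelerated_gradient_step {F : Type*} [NormedAddCommGroup F] [InnerProductSpace ℝ F]
    {L τ Fh Fp : ℝ} {x xt xh xp xtp d : F} (hL : L ≠ 0) (hτ : τ ≠ 0)
    (hxh : xh = (1 - τ) • x + τ • xt) (hxp : xp = xh - (1 / L) • d)
    (hxtp : xtp = xt - τ⁻¹ • (xh - xp))
    (hdescent : Fp ≤ Fh + ⟪d, xp - xh⟫ + L / 2 * ‖xp - xh‖ ^ 2) (y : F) :
    Fp + L * τ ^ 2 / 2 * ‖xtp - y‖ ^ 2
      ≤ (1 - τ) * (Fh + ⟪d, x - xh⟫) + τ * (Fh + ⟪d, y - xh⟫) + L * τ ^ 2 / 2 * ‖xt - y‖ ^ 2 := by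
  have hdecrease : Fp ≤ Fh - ‖d‖ ^ 2 / (2 * L) := by
    refine hdescent.trans_eq ?_
    rw [hxp, sub_sub_cancel_left, inner_neg_right, real_inner_smul_right,
      real_inner_self_eq_norm_sq, norm_neg, norm_smul, mul_pow, Real.norm_eq_abs, sq_abs]
    field_simp
    ring
  have hcoupling : (1 - τ) * ⟪d, x - xh⟫ + τ * ⟪d, y - xh⟫ = -(τ * ⟪d, xt - y⟫) := by
    simp only [hxh, inner_sub_right, inner_add_right, real_inner_smul_right]
    ring
  have hdistance : L * τ ^ 2 / 2 * ‖xtp - y‖ ^ 2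
      = L * τ ^ 2 / 2 * ‖xt - y‖ ^ 2 - τ * ⟪d, xt - y⟫ + ‖d‖ ^ 2 / (2 * L) := by
    have hxtp' : xtp - y = (xt - y) - (τ⁻¹ * (1 / L)) • d := by
      rw [hxtp, hxp, sub_sub_cancel, smul_smul]
      abel
    rw [hxtp', norm_sub_sq_real, norm_smul, real_inner_smul_right, real_inner_comm, mul_pow,
      Real.norm_eq_abs, sq_abs]
    field_simp
  linarith

variable {E F : Type*} [NormedAddCommGroup E] [InnerProductSpace ℝ E] [CompleteSpace E]
  [NormedAddCommGroup F] [InnerProductSpace ℝ F] [CompleteSpace F]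

/-- The full-gradient variant of the algorithm: `γ` holds the smoothness parameters (its value at
`0` is irrelevant), `xt` and `xh` stand for `x̃` and `x̂`, and `τ_k = 1 / (k + 1)` is inlined. -/
structure IsFullGradientScheme (A : E →L[ℝ] F) (u : ℝ → E → E) (g' : F → F) (L : ℝ) (γ : ℕ → ℝ)
    (x xt xh : ℕ → F) : Prop where
  param_one : γ 1 = ‖A‖ ^ 2 / L
  param_succ : ∀ k : ℕ, 1 ≤ k →
    γ (k + 1) = k * γ k * ‖A‖ ^ 2 / (L * γ k + ‖A‖ ^ 2 * ((k : ℝ) + 1))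
  xt_zero : xt 0 = x 0
  xh_eq : ∀ k : ℕ, xh k = (1 - 1 / ((k : ℝ) + 1)) • x k + (1 / ((k : ℝ) + 1)) • xt k
  x_succ : ∀ k : ℕ, x (k + 1)
    = xh k - (1 / (L + ‖A‖ ^ 2 / γ (k + 1))) • smoothedGradient A u g' (γ (k + 1)) (xh k)
  xt_succ : ∀ k : ℕ, xt (k + 1) = xt k - (1 / ((k : ℝ) + 1))⁻¹ • (xh k - x (k + 1))

namespace IsFullGradientScheme

variable {A : E →L[ℝ] F} {S : Set E} {r b : E → ℝ} {u : ℝ → E → E} {g : F → ℝ} {g' : F → F}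
  {L D c : ℝ} {γ : ℕ → ℝ} {x xt xh : ℕ → F} {y : F}

lemma param_eq (h : IsFullGradientScheme A u g' L γ x xt xh) (hL : 0 < L) (hA : 0 < ‖A‖) (k : ℕ) :
    γ (k + 1) = ‖A‖ ^ 2 / L / (2 * k + 1) := by
  induction k with
  | zero => simp [h.param_one]
  | succ k ih =>
    rw [h.param_succ (k + 1) (by omega), ih]
    push_cast
    field_simp
    ring

lemma param_pos (h : IsFullGradientScheme A u g' L γ x xt xh) (hL : 0 < L) (hA : 0 < ‖A‖) {k : ℕ}
    (hk : 1 ≤ k) : 0 < γ k := by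
  obtain ⟨j, rfl⟩ := Nat.exists_eq_add_of_le' hk
  rw [h.param_eq hL hA]
  positivity

lemma add_sq_div_param_eq (h : IsFullGradientScheme A u g' L γ x xt xh) (hL : 0 < L)
    (hA : 0 < ‖A‖) (k : ℕ) : L + ‖A‖ ^ 2 / γ (k + 1) = 2 * L * (k + 1) := by
  rw [h.param_eq hL hA]
  field_simp
  ring

lemma succ_mul_param_le (h : IsFullGradientScheme A u g' L γ x xt xh) (hL : 0 < L) (hA : 0 < ‖A‖)
    {k : ℕ} (hk : 1 ≤ k) : (k + 1) * γ (k + 1) ≤ k * γ k := by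
  obtain ⟨j, rfl⟩ := Nat.exists_eq_add_of_le' hk
  have hdiff : ((j + 1 : ℕ) : ℝ) * γ (j + 1) - ((j + 1 : ℕ) + 1) * γ (j + 1 + 1)
      = ‖A‖ ^ 2 / L / ((2 * j + 1) * (2 * j + 3)) := by
    rw [h.param_eq hL hA, h.param_eq hL hA]
    push_cast
    field_simp
    ring
  rw [← sub_nonneg, hdiff]
  positivity

lemma smoothedObjective_succ_add_le (h : IsFullGradientScheme A u g' L γ x xt xh)
    (hu : IsProxMap S r b u) (hr : ConvexOn ℝ S r) (hb : StrongConvexOn S 1 b)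
    (hg : ∀ y, HasGradientAt g (g' y) y) (hlip : LipschitzWith L.toNNReal g') (hL : 0 < L)
    (hA : 0 < ‖A‖) (y : F) (k : ℕ) :
    (k + 1) * smoothedObjective A r b u g (γ (k + 1)) (x (k + 1)) + L * ‖xt (k + 1) - y‖ ^ 2
      ≤ k * (smoothedObjective A r b u g (γ (k + 1)) (xh k)
          + ⟪smoothedGradient A u g' (γ (k + 1)) (xh k), x k - xh k⟫)
        + (smoothedObjective A r b u g (γ (k + 1)) (xh k)
          + ⟪smoothedGradient A u g' (γ (k + 1)) (xh k), y - xh k⟫)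
        + L * ‖xt k - y‖ ^ 2 := by
  have hγ : 0 < γ (k + 1) := h.param_pos hL hA k.succ_pos
  have hstep := accelerated_gradient_step (L := L + ‖A‖ ^ 2 / γ (k + 1)) (by positivity)
    (by positivity) (h.xh_eq k) (h.x_succ k) (h.xt_succ k)
    (hu.smoothedObjective_le hr hb hL.le hg hlip hγ (xh k) (x (k + 1))) y
  have hscaled := mul_le_mul_of_nonneg_left hstep (Nat.cast_add_one_pos (α := ℝ) k).le
  have hweight : ((k : ℝ) + 1) * ((L + ‖A‖ ^ 2 / γ (k + 1)) * (1 / ((k : ℝ) + 1)) ^ 2 / 2) = L := by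
    rw [h.add_sq_div_param_eq hL hA]
    field_simp
  have hweight_x : ((k : ℝ) + 1) * (1 - 1 / ((k : ℝ) + 1)) = k := by
    field_simp
    ring
  have hweight_y : ((k : ℝ) + 1) * (1 / ((k : ℝ) + 1)) = 1 := by field_simp
  simpa only [mul_add ((k : ℝ) + 1), ← mul_assoc ((k : ℝ) + 1), hweight, hweight_x, hweight_y,
    one_mul] using hscaled

/-- The Lyapunov function `k (H_{γ_k}(x_k) - c) + L ‖x̃_k - y‖²` of the scheme, where `H_γ` is the
smoothed objective and `c` the value at the comparison point `y`. -/
noncomputable def potential (A : E →L[ℝ] F) (r b : E → ℝ) (u : ℝ → E → E) (g : F → ℝ) (L : ℝ)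
    (γ : ℕ → ℝ) (x xt : ℕ → F) (y : F) (c : ℝ) (k : ℕ) : ℝ :=
  k * (smoothedObjective A r b u g (γ k) (x k) - c) + L * ‖xt k - y‖ ^ 2

lemma potential_succ_le (h : IsFullGradientScheme A u g' L γ x xt xh) (hu : IsProxMap S r b u)
    (hr : ConvexOn ℝ S r) (hb : StrongConvexOn S 1 b) (hgc : ConvexOn ℝ Set.univ g)
    (hg : ∀ y, HasGradientAt g (g' y) y) (hlip : LipschitzWith L.toNNReal g') (hL : 0 < L)
    (hA : 0 < ‖A‖) (hy : ∀ v ∈ S, ⟪y, A v⟫ - r v + g y ≤ c) (k : ℕ) :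
    potential A r b u g L γ x xt y c (k + 1) ≤ potential A r b u g L γ x xt y c k
      + b (u (γ (k + 1)) (A.adjoint (xh k))) * (k * γ k - (k + 1) * γ (k + 1)) := by
  have hγ : 0 < γ (k + 1) := h.param_pos hL hA k.succ_pos
  have hstep := h.smoothedObjective_succ_add_le hu hr hb hg hlip hL hA y k
  have hlower_y := hu.smoothedObjective_add_inner_le_of_forall_le hgc hg hγ hy (xh k)
  have hlower_x : k * (smoothedObjective A r b u g (γ (k + 1)) (xh k)
      + ⟪smoothedGradient A u g' (γ (k + 1)) (xh k), x k - xh k⟫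
      + (γ (k + 1) - γ k) * b (u (γ (k + 1)) (A.adjoint (xh k))))
      ≤ k * smoothedObjective A r b u g (γ k) (x k) := by
    rcases k.eq_zero_or_pos with rfl | hk
    · simp
    · gcongr
      exact hu.smoothedObjective_add_inner_le hgc hg hγ (h.param_pos hL hA hk) (xh k) (x k)
  simp only [potential, Nat.cast_add, Nat.cast_one]
  linarith

lemma potential_add_le (h : IsFullGradientScheme A u g' L γ x xt xh) (hu : IsProxMap S r b u)
    (hr : ConvexOn ℝ S r) (hb : StrongConvexOn S 1 b) (hgc : ConvexOn ℝ Set.univ g)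
    (hg : ∀ y, HasGradientAt g (g' y) y) (hlip : LipschitzWith L.toNNReal g') (hL : 0 < L)
    (hA : 0 < ‖A‖) (hy : ∀ v ∈ S, ⟪y, A v⟫ - r v + g y ≤ c) (hbD : ∀ v ∈ S, b v ∈ Set.Icc 0 D)
    {k : ℕ} (hk : 1 ≤ k) :
    potential A r b u g L γ x xt y c k + k * γ k * D ≤ L * ‖x 0 - y‖ ^ 2 + ‖A‖ ^ 2 / L * D := by
  have hγ (j : ℕ) : 0 < γ (j + 1) := h.param_pos hL hA j.succ_pos
  have hbu (j : ℕ) := hbD _ (hu.mem _ (hγ j) (A.adjoint (xh j)))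
  have hstep := h.potential_succ_le hu hr hb hgc hg hlip hL hA hy
  induction k, hk using Nat.le_induction with
  | base =>
    have hinit : potential A r b u g L γ x xt y c 0 = L * ‖x 0 - y‖ ^ 2 := by
      simp [potential, h.xt_zero]
    have herror := mul_nonneg (hbu 0).1 (hγ 0).le
    have hfirst := hstep 0
    simp only [hinit, Nat.cast_zero, zero_mul, zero_add, one_mul, zero_sub, mul_neg]
      at hfirst herror
    rw [Nat.cast_one, one_mul, h.param_one]
    linarith
  | succ k hk ih =>
    have herror := mul_le_mul_of_nonneg_right (hbu k).2
      (sub_nonneg.2 (h.succ_mul_param_le hL hA hk))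
    push_cast
    linarith [hstep k]

theorem objective_le (h : IsFullGradientScheme A u g' L γ x xt xh) (hu : IsProxMap S r b u)
    (hr : ConvexOn ℝ S r) (hb : StrongConvexOn S 1 b) (hgc : ConvexOn ℝ Set.univ g)
    (hg : ∀ y, HasGradientAt g (g' y) y) (hlip : LipschitzWith L.toNNReal g') (hL : 0 < L)
    (hA : 0 < ‖A‖) (hy : ∀ v ∈ S, ⟪y, A v⟫ - r v + g y ≤ c) (hbD : ∀ v ∈ S, b v ∈ Set.Icc 0 D)
    {k : ℕ} (hk : 1 ≤ k) {v : E} (hv : v ∈ S) :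
    ⟪x k, A v⟫ - r v + g (x k) ≤ c + (L * ‖x 0 - y‖ ^ 2 + ‖A‖ ^ 2 / L * D) / k := by
  have hk0 : (0 : ℝ) < k := by exact_mod_cast hk
  have hpotential := h.potential_add_le hu hr hb hgc hg hlip hL hA hy hbD hk
  have hdist : 0 ≤ L * ‖xt k - y‖ ^ 2 := by positivity
  have hgap : smoothedObjective A r b u g (γ k) (x k) + γ k * D - c
      ≤ (L * ‖x 0 - y‖ ^ 2 + ‖A‖ ^ 2 / L * D) / k := by
    rw [le_div_iff₀ hk0]
    simp only [potential] at hpotential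
    linarith
  linarith [hu.le_smoothedObjective_add (A := A) (g := g) (h.param_pos hL hA hk) hv (hbD v hv).2
    (x k)]

end IsFullGradientScheme

end Acceleration

section ExtendedValued

/-- The points of `U` at which the extended-valued function `φ` is not `⊤`. -/
def effectiveDomain {E : Type*} (U : Set E) (φ : E → EReal) : Set E :=
  {v | v ∈ U ∧ φ v ≠ ⊤}

lemma coe_toReal_of_mem_effectiveDomain {E : Type*} {U : Set E} {φ : E → EReal} {v : E}
    (hφ : ∀ v, φ v ≠ ⊥) (hv : v ∈ effectiveDomain U φ) : ((φ v).toReal : EReal) = φ v :=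
  EReal.coe_toReal hv.2 (hφ v)

lemma iSup₂_coe_sub_le_coe_iff {E : Type*} {U : Set E} {φ : E → EReal} (hφ : ∀ v, φ v ≠ ⊥)
    (ℓ : E → ℝ) (c : ℝ) :
    ⨆ v ∈ U, ((ℓ v : EReal) - φ v) ≤ c ↔
      ∀ v ∈ effectiveDomain U φ, ℓ v - (φ v).toReal ≤ c := by
  rw [iSup₂_le_iff]
  refine ⟨fun h v hv ↦ ?_, fun h v hv ↦ ?_⟩
  · have hle := h v hv.1
    rw [← coe_toReal_of_mem_effectiveDomain hφ hv] at hle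
    exact_mod_cast hle
  · by_cases hvtop : φ v = ⊤
    · simp [hvtop]
    · rw [← coe_toReal_of_mem_effectiveDomain hφ ⟨hv, hvtop⟩]
      exact_mod_cast h v ⟨hv, hvtop⟩

lemma convexOn_toReal_effectiveDomain {E : Type*} [AddCommGroup E] [Module ℝ E] {U : Set E}
    {φ : E → EReal} (hU : Convex ℝ U) (hφ : ∀ v, φ v ≠ ⊥)
    (hφcx : ∀ v w : E, ∀ a c : ℝ, 0 ≤ a → 0 ≤ c → a + c = 1 →
      φ (a • v + c • w) ≤ (a : EReal) * φ v + (c : EReal) * φ w) :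
    ConvexOn ℝ (effectiveDomain U φ) fun v ↦ (φ v).toReal := by
  have hle {v w : E} (hv : v ∈ effectiveDomain U φ) (hw : w ∈ effectiveDomain U φ) {s t : ℝ}
      (hs : 0 ≤ s) (ht : 0 ≤ t) (hst : s + t = 1) :
      φ (s • v + t • w) ≤ ((s * (φ v).toReal + t * (φ w).toReal : ℝ) : EReal) := by
    push_cast
    simpa only [coe_toReal_of_mem_effectiveDomain hφ hv, coe_toReal_of_mem_effectiveDomain hφ hw]
      using hφcx v w s t hs ht hst
  have hmem {v w : E} (hv : v ∈ effectiveDomain U φ) (hw : w ∈ effectiveDomain U φ) {s t : ℝ}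
      (hs : 0 ≤ s) (ht : 0 ≤ t) (hst : s + t = 1) : s • v + t • w ∈ effectiveDomain U φ :=
    ⟨hU hv.1 hw.1 hs ht hst, ne_top_of_le_ne_top (EReal.coe_ne_top _) (hle hv hw hs ht hst)⟩
  refine ⟨fun v hv w hw s t ↦ hmem hv hw, fun v hv w hw s t hs ht hst ↦ ?_⟩
  have hreal := hle hv hw hs ht hst
  rw [← coe_toReal_of_mem_effectiveDomain hφ (hmem hv hw hs ht hst)] at hreal
  exact_mod_cast hreal

variable {E : Type*} [NormedAddCommGroup E] [InnerProductSpace ℝ E]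

lemma isProxMap_effectiveDomain {U : Set E} {φ : E → EReal} {b : E → ℝ} {u : ℝ → E → E}
    (hφ : ∀ v, φ v ≠ ⊥) (hmem : ∀ γ > (0 : ℝ), ∀ z, u γ z ∈ U)
    (hfin : ∀ γ > (0 : ℝ), ∀ z, φ (u γ z) ≠ ⊤)
    (hmax : ∀ γ > (0 : ℝ), ∀ z, ∀ v ∈ U, (⟪z, v⟫ : EReal) - φ v - ((γ * b v : ℝ) : EReal)
      ≤ (⟪z, u γ z⟫ : EReal) - φ (u γ z) - ((γ * b (u γ z) : ℝ) : EReal)) :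
    IsProxMap (effectiveDomain U φ) (fun v ↦ (φ v).toReal) b u where
  mem γ hγ z := ⟨hmem γ hγ z, hfin γ hγ z⟩
  isMaxOn γ hγ z v hv := by
    have hle := hmax γ hγ z v hv.1
    rw [← coe_toReal_of_mem_effectiveDomain hφ hv,
      ← coe_toReal_of_mem_effectiveDomain hφ ⟨hmem γ hγ z, hfin γ hγ z⟩] at hle
    exact_mod_cast hle

end ExtendedValued

theorem stmt_17_general {E F : Type*} [NormedAddCommGroup E] [InnerProductSpace ℝ E]
    [CompleteSpace E] [NormedAddCommGroup F] [InnerProductSpace ℝ F] [CompleteSpace F]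
    {U : Set E} {φ : E → EReal} {b : E → ℝ} {u : ℝ → E → E} {A : E →L[ℝ] F} {f : F → EReal}
    {g : F → ℝ} {g' : F → F} {L D c : ℝ} {γ : ℕ → ℝ} {x xt xh : ℕ → F} {y : F}
    (hφ : ∀ v, φ v ≠ ⊥)
    (hφcx : ∀ v w : E, ∀ a c : ℝ, 0 ≤ a → 0 ≤ c → a + c = 1 →
      φ (a • v + c • w) ≤ (a : EReal) * φ v + (c : EReal) * φ w)
    (hb : StrongConvexOn U 1 b) (hbD : ∀ v ∈ U, φ v ≠ ⊤ → b v ∈ Set.Icc 0 D)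
    (hmem : ∀ γ > (0 : ℝ), ∀ z, u γ z ∈ U) (hfin : ∀ γ > (0 : ℝ), ∀ z, φ (u γ z) ≠ ⊤)
    (hmax : ∀ γ > (0 : ℝ), ∀ z, ∀ v ∈ U, (⟪z, v⟫ : EReal) - φ v - ((γ * b v : ℝ) : EReal)
      ≤ (⟪z, u γ z⟫ : EReal) - φ (u γ z) - ((γ * b (u γ z) : ℝ) : EReal))
    (hA : 0 < ‖A‖) (hf : ∀ x, f x = ⨆ v ∈ U, ((⟪x, A v⟫ : EReal) - φ v))
    (hgc : ConvexOn ℝ Set.univ g) (hg : ∀ y, HasGradientAt g (g' y) y) (hL : 0 < L)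
    (hlip : LipschitzWith L.toNNReal g') (hscheme : IsFullGradientScheme A u g' L γ x xt xh)
    (hy : f y + (g y : EReal) = c) {k : ℕ} (hk : 1 ≤ k) :
    f (x k) + (g (x k) : EReal) - c
      ≤ (((L * ‖x 0 - y‖ ^ 2 + ‖A‖ ^ 2 / L * D) / k : ℝ) : EReal) := by
  have hr := convexOn_toReal_effectiveDomain hb.1 hφ hφcx
  have hb' : StrongConvexOn (effectiveDomain U φ) 1 b :=
    ⟨hr.1, fun v hv w hw ↦ hb.2 hv.1 hw.1⟩
  have hycomp (v : E) (hv : v ∈ effectiveDomain U φ) : ⟪y, A v⟫ - (φ v).toReal + g y ≤ c := by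
    have hfy : f y ≤ ((c - g y : ℝ) : EReal) := by
      rw [EReal.coe_sub, ← hy, EReal.add_sub_cancel_right]
    rw [hf, iSup₂_coe_sub_le_coe_iff hφ (fun v ↦ ⟪y, A v⟫)] at hfy
    linarith [hfy v hv]
  have hfx : f (x k)
      ≤ ((c + (L * ‖x 0 - y‖ ^ 2 + ‖A‖ ^ 2 / L * D) / k - g (x k) : ℝ) : EReal) := by
    rw [hf, iSup₂_coe_sub_le_coe_iff hφ (fun v ↦ ⟪x k, A v⟫)]
    intro v hv
    exact le_sub_iff_add_le.2 (hscheme.objective_le (isProxMap_effectiveDomain hφ hmem hfin hmax)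
      hr hb' hgc hg hlip hL hA hycomp (fun v hv ↦ hbD v hv.1 hv.2) hk hv)
  rw [EReal.sub_le_iff_le_add (by simp) (by simp)]
  refine (add_le_add_left hfx _).trans_eq ?_
  norm_cast
  ring

lemma inv_rate_le_log_rate {a L Lb D R : ℝ} {k : ℕ} (ha : 0 ≤ a) (hL : 0 < L) (hLb : 1 ≤ Lb)
    (hD : 0 ≤ D) (hR : 0 ≤ R) :
    (L * R + a / L * D) / k ≤ 3 * L / (2 * (k : ℝ)) * R + a / (L * (k : ℝ)) * (2 * Lb / L + 1) * D
      + (Lb - 1) * a / (L ^ 2 * (k : ℝ)) * (Real.log (k : ℝ) + 1) * D := by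
  have hdistance : 0 ≤ L / (2 * (k : ℝ)) * R := by positivity
  have hdiameter : 0 ≤ a / (L * (k : ℝ)) * (2 * Lb / L) * D := by positivity
  have hlogarithm : 0 ≤ (Lb - 1) * a / (L ^ 2 * (k : ℝ)) * (Real.log (k : ℝ) + 1) * D :=
    mul_nonneg (mul_nonneg (div_nonneg (mul_nonneg (sub_nonneg.2 hLb) ha) (by positivity))
      (add_nonneg (Real.log_natCast_nonneg k) zero_le_one)) hD
  have hsplit : 3 * L / (2 * (k : ℝ)) * R + a / (L * (k : ℝ)) * (2 * Lb / L + 1) * D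
      = (L * R + a / L * D) / k + L / (2 * (k : ℝ)) * R + a / (L * (k : ℝ)) * (2 * Lb / L) * D := by
    ring
  linarith

theorem stmt_17
    {n : ℕ} (hn : 1 ≤ n)
    (U : Set (EuclideanSpace ℝ (Fin n)))
    (hUne : U.Nonempty) (hUcl : IsClosed U) (hUcx : Convex ℝ U)
    (φ : EuclideanSpace ℝ (Fin n) → EReal)
    (hφbot : ∀ v, φ v ≠ ⊥)
    (hφlsc : LowerSemicontinuous φ)
    (hφcx : ∀ v w : EuclideanSpace ℝ (Fin n), ∀ a c : ℝ, 0 ≤ a → 0 ≤ c → a + c = 1 →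
      φ (a • v + c • w) ≤ (a : EReal) * φ v + (c : EReal) * φ w)
    (hφdom : ∃ v ∈ U, φ v ≠ ⊤)
    (b : EuclideanSpace ℝ (Fin n) → ℝ)
    (hbcont : Continuous b)
    (hbsc : StrongConvexOn U 1 b)
    (ustar : ℝ → EuclideanSpace ℝ (Fin n) → EuclideanSpace ℝ (Fin n))
    (humem : ∀ γ > (0:ℝ), ∀ z, ustar γ z ∈ U)
    (hufin : ∀ γ > (0:ℝ), ∀ z, φ (ustar γ z) ≠ ⊤)
    (humax : ∀ γ > (0:ℝ), ∀ z, ∀ v ∈ U,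
      (⟪z, v⟫ : EReal) - φ v - ((γ * b v : ℝ) : EReal)
        ≤ (⟪z, ustar γ z⟫ : EReal) - φ (ustar γ z) - ((γ * b (ustar γ z) : ℝ) : EReal))
    (φs : ℝ → EuclideanSpace ℝ (Fin n) → ℝ)
    (hφs : ∀ γ z, φs γ z = ⟪z, ustar γ z⟫ - (φ (ustar γ z)).toReal - γ * b (ustar γ z))
    {p : ℕ} (hp : 1 ≤ p)
    (A : EuclideanSpace ℝ (Fin n) →L[ℝ] EuclideanSpace ℝ (Fin p))
    (hAnorm : 0 < ‖A‖)
    (b' : EuclideanSpace ℝ (Fin n) → EuclideanSpace ℝ (Fin n))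
    (Lb : ℝ) (hLb : 1 ≤ Lb)
    (hbgrad : ∀ v, HasGradientAt b (b' v) v)
    (hbgradlip : LipschitzWith (Real.toNNReal Lb) b')
    (uc : EuclideanSpace ℝ (Fin n)) (hucU : uc ∈ U) (hbuc : b uc = 0)
    (hucmin : ∀ v ∈ U, b uc ≤ b v)
    (hbsand : ∀ v ∈ U, (1/2) * ‖v - uc‖^2 ≤ b v ∧ b v ≤ (Lb/2) * ‖v - uc‖^2)
    (DU : ℝ)
    (hDUbdd : BddAbove (b '' {v | v ∈ U ∧ φ v ≠ ⊤}))
    (hDU : DU = sSup (b '' {v | v ∈ U ∧ φ v ≠ ⊤}))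
    (f : EuclideanSpace ℝ (Fin p) → EReal)
    (hf : ∀ x, f x = ⨆ v ∈ U, ((⟪x, A v⟫ : EReal) - φ v))
    (g : EuclideanSpace ℝ (Fin p) → ℝ) (hgcx : ConvexOn ℝ Set.univ g)
    (g' : EuclideanSpace ℝ (Fin p) → EuclideanSpace ℝ (Fin p))
    (Lg : ℝ) (hLg : 0 < Lg)
    (hggrad : ∀ y, HasGradientAt g (g' y) y)
    (hglip : LipschitzWith (Real.toNNReal Lg) g')
    (τ : ℕ → ℝ) (hτ : ∀ k : ℕ, τ k = 1/((k:ℝ) + 1))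
    (γs : ℕ → ℝ) (hγs1 : γs 1 = ‖A‖^2 / Lg)
    (hγsrec : ∀ k : ℕ, 1 ≤ k →
      γs (k+1) = (k:ℝ) * γs k * ‖A‖^2 / (Lg * γs k + ‖A‖^2 * ((k:ℝ)+1)))
    (x xt xh : ℕ → EuclideanSpace ℝ (Fin p))
    (hxt0 : xt 0 = x 0)
    (hxh : ∀ k : ℕ, xh k = (1 - τ k) • x k + τ k • xt k)
    (hxrec : ∀ k : ℕ, x (k+1)
        = xh k - (1/(Lg + ‖A‖^2/γs (k+1))) • (g' (xh k) + A (ustar (γs (k+1)) ((ContinuousLinearMap.adjoint A) (xh k)))))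
    (hxtrec : ∀ k : ℕ, xt (k+1) = xt k - (τ k)⁻¹ • (xh k - x (k+1)))
    (xs : EuclideanSpace ℝ (Fin p)) (Fs : ℝ)
    (hFs : f xs + ((g xs : ℝ) : EReal) = (Fs : EReal))
    (hFmin : ∀ y, (Fs : EReal) ≤ f y + ((g y : ℝ) : EReal))
    :
    ∀ k : ℕ, 1 ≤ k →
      (f (x k) + ((g (x k) : ℝ) : EReal)) - (Fs : EReal)
        ≤ ((3*Lg/(2*(k:ℝ)) * ‖x 0 - xs‖^2
            + ‖A‖^2/(Lg*(k:ℝ)) * (2*Lb/Lg + 1) * DU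
            + (Lb - 1)*‖A‖^2/(Lg^2*(k:ℝ)) * (Real.log (k:ℝ) + 1) * DU : ℝ) : EReal) := by
  intro k hk
  have hbD (v) (hv : v ∈ U) (hvtop : φ v ≠ ⊤) : b v ∈ Set.Icc 0 DU :=
    ⟨hbuc ▸ hucmin v hv, hDU ▸ le_csSup hDUbdd ⟨v, ⟨hv, hvtop⟩, rfl⟩⟩
  have hDU0 : 0 ≤ DU := hφdom.elim fun v hv ↦ (hbD v hv.1 hv.2).1.trans (hbD v hv.1 hv.2).2
  have hscheme : IsFullGradientScheme A ustar g' Lg γs x xt xh :=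
    ⟨hγs1, hγsrec, hxt0, by simpa only [hτ] using hxh, hxrec, by simpa only [hτ] using hxtrec⟩
  exact (stmt_17_general hφbot hφcx hbsc hbD humem hufin humax hAnorm hf hgcx hggrad hLg hglip
    hscheme hFs hk).trans (EReal.coe_le_coe_iff.2
      (inv_rate_le_log_rate (sq_nonneg _) hLg hLb hDU0 (sq_nonneg _)))
end

section
/- For every k ≥ 0, the averaged primal iterate satisfies dist(b − Aū^k, K) ≤ ‖A‖²·( ‖x⁰ − x*‖ + √( ‖x⁰ − x*‖² + 2‖A‖^{−2}·(2γ₁² + γ₁)·D_U ) )/( γ₁·(k + 1) ). -/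
open scoped RealInnerProductSpace BigOperators

/-!
The method is accelerated proximal gradient on the dual, where the smoothed part
`y ↦ max_u ⟪y, A u⟫ - φ u - γ b_U(u)` changes with `k`. Strong convexity of `b_U` makes it
`‖A‖² / γ`-smooth, which matches the step `β = γ / ‖A‖²`, and also yields in each step a term
`-‖u - v‖²` that absorbs most of the cost of decreasing `γ`; what remains is of order `D_U / k²`.
Summing gives, for *every* dual point `y` and not only for the minimizer,

`(k + 1) (G(x*) - G(y) - ⟪y - x*, A ū⟫) ≤ 2 γ₁ D_U + ‖A‖² / (2 γ₁) ‖x⁰ - y‖²`, `G := s_K - ⟪b, ·⟫`.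

Taking `y = x* + s e`, with `e` the unit normal separating `b - A ū` from `K`, bounds the left side
below by `(k + 1) s dist(b - A ū, K)`; solving the resulting quadratic inequality in `s` gives the
rate.
-/

namespace DualSmoothing

section StrongConvexity

theorem add_modulus_le_of_isMinOn {E : Type*} [NormedAddCommGroup E] [NormedSpace ℝ E]
    {s : Set E} {ω : ℝ → ℝ} {f : E → ℝ} {x y : E} (hf : UniformConvexOn s ω f)
    (hmin : IsMinOn f s x) (hx : x ∈ s) (hy : y ∈ s) : f x + ω ‖x - y‖ ≤ f y := by
  have segment : ∀ t ∈ Set.Ioo (0 : ℝ) 1, f x + (1 - t) * ω ‖x - y‖ ≤ f y := by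
    rintro t ⟨ht0, ht1⟩
    have hconv := hf.2 hx hy (sub_nonneg.2 ht1.le) ht0.le (by ring)
    have hle := hmin (hf.1 hx hy (sub_nonneg.2 ht1.le) ht0.le (by ring))
    simp only [smul_eq_mul, Set.mem_ofPred_eq] at hconv hle
    refine le_of_mul_le_mul_left ?_ ht0
    linarith
  have htendsto : Filter.Tendsto (fun t : ℝ ↦ f x + (1 - t) * ω ‖x - y‖) (nhdsWithin 0 (Set.Ioi 0))
      (nhds (f x + (1 - 0) * ω ‖x - y‖)) :=
    (Continuous.tendsto (by fun_prop) 0).mono_left nhdsWithin_le_nhds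
  simpa using le_of_tendsto htendsto
    (Filter.eventually_of_mem (Ioo_mem_nhdsGT one_pos) segment)

variable {E : Type*} [NormedAddCommGroup E] [InnerProductSpace ℝ E]

theorem strongConvexOn_add_sq_norm_sub {s : Set E} {h : E → ℝ} (hh : ConvexOn ℝ s h) (m : ℝ)
    (c : E) : StrongConvexOn s (2 * m) fun x ↦ h x + m * ‖x - c‖ ^ 2 := by
  rw [strongConvexOn_iff_convex]
  have affine : ConvexOn ℝ s fun x ↦ ((-2 * m) • innerSL ℝ c) x + m * ‖c‖ ^ 2 :=
    (((-2 * m) • innerSL ℝ c).toLinearMap.convexOn hh.1).add_const _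
  refine (hh.add affine).congr fun x _ ↦ ?_
  simp only [norm_sub_sq_real, Pi.add_apply, smul_apply, innerSL_apply_apply,
    smul_eq_mul, real_inner_comm c x]
  ring

theorem three_point_of_isMinOn {s : Set E} {h : E → ℝ} (hh : ConvexOn ℝ s h) {m : ℝ} {c p z : E}
    (hmin : IsMinOn (fun x ↦ h x + m * ‖x - c‖ ^ 2) s p) (hp : p ∈ s) (hz : z ∈ s) :
    h p + m * ‖p - c‖ ^ 2 + m * ‖z - p‖ ^ 2 ≤ h z + m * ‖z - c‖ ^ 2 := by
  simpa [norm_sub_rev p z] using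
    add_modulus_le_of_isMinOn (strongConvexOn_add_sq_norm_sub hh m c) hmin hp hz

end StrongConvexity

section SupportFunction

variable {H : Type*} [NormedAddCommGroup H] [InnerProductSpace ℝ H] {K : Set H} {y : H} {M : ℝ}

/-- The barrier cone of `K`, i.e. the effective domain of its support function. -/
def barrierCone (K : Set H) : Set H := {y | BddAbove ((fun r ↦ ⟪y, r⟫) '' K)}

/-- The support function `s_K` of `K` as a real function; it takes the junk value `0` outside
`barrierCone K`. -/
noncomputable def supportFunction (K : Set H) (y : H) : ℝ := sSup ((fun r ↦ ⟪y, r⟫) '' K)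

theorem mem_barrierCone_of_inner_le (h : ∀ r ∈ K, ⟪y, r⟫ ≤ M) : y ∈ barrierCone K :=
  ⟨M, Set.forall_mem_image.2 h⟩

theorem inner_le_supportFunction (hy : y ∈ barrierCone K) {r : H} (hr : r ∈ K) :
    ⟪y, r⟫ ≤ supportFunction K y :=
  le_csSup hy ⟨r, hr, rfl⟩

theorem supportFunction_le (hK : K.Nonempty) (h : ∀ r ∈ K, ⟪y, r⟫ ≤ M) :
    supportFunction K y ≤ M :=
  csSup_le (hK.image _) (Set.forall_mem_image.2 h)

theorem convexOn_supportFunction (hK : K.Nonempty) :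
    ConvexOn ℝ (barrierCone K) (supportFunction K) := by
  have inner_le : ∀ y ∈ barrierCone K, ∀ z ∈ barrierCone K, ∀ a b : ℝ, 0 ≤ a → 0 ≤ b →
      ∀ r ∈ K, ⟪a • y + b • z, r⟫ ≤ a * supportFunction K y + b * supportFunction K z := by
    intro y hy z hz a b ha hb r hr
    rw [inner_add_left, real_inner_smul_left, real_inner_smul_left]
    gcongr
    exacts [inner_le_supportFunction hy hr, inner_le_supportFunction hz hr]
  exact ⟨fun y hy z hz a b ha hb _ ↦ mem_barrierCone_of_inner_le (inner_le y hy z hz a b ha hb),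
    fun y hy z hz a b ha hb _ ↦ supportFunction_le hK (inner_le y hy z hz a b ha hb)⟩

theorem coe_supportFunction (hK : K.Nonempty) (hy : y ∈ barrierCone K) :
    (supportFunction K y : EReal) = ⨆ r ∈ K, (⟪y, r⟫ : EReal) := by
  refine le_antisymm (EReal.le_of_forall_lt_iff_le.1 fun M hM ↦ ?_)
    (iSup₂_le fun r hr ↦ EReal.coe_le_coe (inner_le_supportFunction hy hr))
  exact EReal.coe_le_coe <| supportFunction_le hK fun r hr ↦
    EReal.coe_le_coe_iff.1 ((le_iSup₂_of_le r hr le_rfl).trans hM.le)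

theorem mem_barrierCone_of_iSup_ne_top (h : (⨆ r ∈ K, (⟪y, r⟫ : EReal)) ≠ ⊤) :
    y ∈ barrierCone K := by
  obtain ⟨M, hM, -⟩ := EReal.lt_iff_exists_real_btwn.1 h.lt_top
  exact mem_barrierCone_of_inner_le fun r hr ↦
    EReal.coe_le_coe_iff.1 ((le_iSup₂_of_le r hr le_rfl).trans hM.le)

theorem exists_norm_le_one_inner_add_infDist_le [CompleteSpace H] (hK : K.Nonempty)
    (hKcx : Convex ℝ K) (z : H) :
    ∃ e : H, ‖e‖ ≤ 1 ∧ ∀ r ∈ K, ⟪e, r⟫ + Metric.infDist z K ≤ ⟪e, z⟫ := by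
  obtain ⟨q, hq, hqmin⟩ := exists_norm_eq_iInf_of_complete_convex hK.closure
    isClosed_closure.isComplete hKcx.closure z
  have obtuse := (norm_eq_iInf_iff_real_inner_le_zero hKcx.closure hq).1 hqmin
  have hdist : Metric.infDist z K ≤ ‖z - q‖ := by
    rw [← Metric.infDist_closure, ← dist_eq_norm]
    exact Metric.infDist_le_dist_of_mem hq
  refine ⟨‖z - q‖⁻¹ • (z - q), ?_, fun r hr ↦ ?_⟩
  · rw [norm_smul, norm_inv, norm_norm]
    exact inv_mul_le_one
  · have hnormal : ⟪‖z - q‖⁻¹ • (z - q), r - q⟫ ≤ 0 := by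
      rw [real_inner_smul_left]
      exact mul_nonpos_of_nonneg_of_nonpos (by positivity) (obtuse r (subset_closure hr))
    have hself : ⟪‖z - q‖⁻¹ • (z - q), z - q⟫ = ‖z - q‖ := by
      rw [real_inner_smul_left, real_inner_self_eq_norm_sq, sq, ← mul_assoc, inv_mul_mul_self]
    simp only [inner_sub_right] at hnormal hself
    linarith

theorem exists_norm_le_one_supportFunction_add_smul_le [CompleteSpace H] (hK : K.Nonempty)
    (hKcx : Convex ℝ K) (z : H) :
    ∃ e : H, ‖e‖ ≤ 1 ∧ ∀ y ∈ barrierCone K, ∀ s : ℝ, 0 ≤ s → y + s • e ∈ barrierCone K ∧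
      supportFunction K (y + s • e) ≤ supportFunction K y + s * (⟪e, z⟫ - Metric.infDist z K) := by
  obtain ⟨e, he, hsep⟩ := exists_norm_le_one_inner_add_infDist_le hK hKcx z
  refine ⟨e, he, fun y hy s hs ↦ ?_⟩
  have inner_le (r : H) (hr : r ∈ K) :
      ⟪y + s • e, r⟫ ≤ supportFunction K y + s * (⟪e, z⟫ - Metric.infDist z K) := by
    rw [inner_add_left, real_inner_smul_left]
    gcongr
    exacts [inner_le_supportFunction hy hr, le_sub_iff_add_le.2 (hsep r hr)]
  exact ⟨mem_barrierCone_of_inner_le inner_le, supportFunction_le hK inner_le⟩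

theorem convexOn_supportFunction_sub_inner (hK : K.Nonempty) (b : H) :
    ConvexOn ℝ (barrierCone K) fun y ↦ supportFunction K y - ⟪b, y⟫ := by
  have hconv := convexOn_supportFunction hK
  exact hconv.sub ((innerSL ℝ b).toLinearMap.concaveOn hconv.1)

theorem mem_barrierCone_and_supportFunction_sub_inner_le (hK : K.Nonempty) {a b : H}
    (h : ∀ r ∈ K, ⟪y, a - b + r⟫ ≤ M) :
    y ∈ barrierCone K ∧ supportFunction K y - ⟪b, y⟫ ≤ M - ⟪y, a⟫ := by
  have inner_le (r : H) (hr : r ∈ K) : ⟪y, r⟫ ≤ M - ⟪y, a⟫ + ⟪b, y⟫ := by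
    have := h r hr
    rw [inner_add_right, inner_sub_right, real_inner_comm b y] at this
    linarith
  exact ⟨mem_barrierCone_of_inner_le inner_le,
    sub_le_iff_le_add.2 (supportFunction_le hK inner_le)⟩

end SupportFunction

section QuadraticInequalities

/-- The best choice is `s = a / (2 c) - d`, where `a s - c (d + s) ^ 2` is maximal. -/
theorem le_of_forall_mul_le_add_sq {a c d M : ℝ} (hc : 0 < c)
    (h : ∀ s, 0 ≤ s → a * s ≤ M + c * (d + s) ^ 2) :
    a ≤ 2 * c * (d + √(d ^ 2 + M / c)) := by
  rw [← div_le_iff₀' (by positivity), ← sub_le_iff_le_add']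
  rcases le_total (a / (2 * c) - d) 0 with hs | hs
  · exact hs.trans (Real.sqrt_nonneg _)
  · refine Real.le_sqrt_of_sq_le ?_
    rw [← sub_le_iff_le_add', le_div_iff₀ hc]
    have hself : a = 2 * c * (a / (2 * c)) := by field_simp
    generalize a / (2 * c) = q at hself hs ⊢
    have := h _ hs
    rw [hself] at this
    linarith

variable {E : Type*} [NormedAddCommGroup E] [InnerProductSpace ℝ E]

theorem sq_norm_sub_sq_norm_sub_mul_sq_norm_sub_le {t : ℝ} (ht : 0 ≤ t) (a c : E) :
    ‖a‖ ^ 2 - ‖c‖ ^ 2 - t * ‖c - a‖ ^ 2 ≤ ‖a‖ ^ 2 / (t + 1) := by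
  have complete_square : ‖a‖ ^ 2 / (t + 1) - (‖a‖ ^ 2 - ‖c‖ ^ 2 - t * ‖c - a‖ ^ 2)
      = (t + 1) * ‖c - (t / (t + 1)) • a‖ ^ 2 := by
    rw [norm_sub_sq_real, norm_sub_sq_real, norm_smul, real_inner_smul_right, mul_pow,
      Real.norm_eq_abs, sq_abs]
    field_simp
    ring
  have : 0 ≤ (t + 1) * ‖c - (t / (t + 1)) • a‖ ^ 2 := by positivity
  linarith

/-- Since `z = (t + 1) w - t x` and `z' = (t + 1) x' - t x`, the prox terms of an accelerated step
telescope. -/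
theorem weighted_sq_norm_sub_eq {t : ℝ} {x x' w z z' y : E}
    (hw : (t + 1) • w = t • x + z) (hz' : z' = z - (t + 1) • (w - x')) :
    (t + 1) * (t * (‖x - w‖ ^ 2 - ‖x - x'‖ ^ 2) + (‖y - w‖ ^ 2 - ‖y - x'‖ ^ 2))
      = ‖z - y‖ ^ 2 - ‖z' - y‖ ^ 2 := by
  obtain rfl : z = (t + 1) • w - t • x := by rw [hw]; abel
  subst hz'
  simp only [← real_inner_self_eq_norm_sq, inner_sub_left, inner_sub_right, real_inner_smul_left,
    real_inner_smul_right, real_inner_comm w x, real_inner_comm x' x, real_inner_comm y x,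
    real_inner_comm x' w, real_inner_comm y w, real_inner_comm y x']
  ring

end QuadraticInequalities

section SmoothedLagrangian

variable {E H : Type*} [NormedAddCommGroup E] [InnerProductSpace ℝ E]
  [NormedAddCommGroup H] [InnerProductSpace ℝ H]
  {A : E →L[ℝ] H} {φ : E → ℝ} {D : Set E} {uc : E} {γ : ℝ}

/-- The function `u ↦ ⟪y, A u⟫ - φ u - γ b_U(u)` whose maximum over `u` is the smooth part of the
smoothed dual objective at `y`. -/
noncomputable def smoothedLagrangian (A : E →L[ℝ] H) (φ : E → ℝ) (uc : E) (γ : ℝ) (y : H)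
    (u : E) : ℝ :=
  ⟪y, A u⟫ - φ u - γ * ((1 / 2) * ‖u - uc‖ ^ 2)

theorem smoothedLagrangian_add_sq_le_of_isMaxOn (hφ : ConvexOn ℝ D φ) {y : H} {u v : E}
    (hmax : IsMaxOn (smoothedLagrangian A φ uc γ y) D u) (hu : u ∈ D) (hv : v ∈ D) :
    smoothedLagrangian A φ uc γ y v + γ / 2 * ‖v - u‖ ^ 2 ≤ smoothedLagrangian A φ uc γ y u := by
  have hconv : ConvexOn ℝ D fun w ↦ φ w + (-(innerSL ℝ y ∘L A)) w :=
    hφ.add ((-(innerSL ℝ y ∘L A)).toLinearMap.convexOn hφ.1)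
  have hmin : IsMinOn (fun w ↦ φ w + (-(innerSL ℝ y ∘L A)) w + γ / 2 * ‖w - uc‖ ^ 2) D u := by
    intro w hw
    have := hmax hw
    simp only [Set.mem_ofPred_eq, smoothedLagrangian, neg_apply, ContinuousLinearMap.comp_apply,
      innerSL_apply_apply] at this ⊢
    linarith
  have := three_point_of_isMinOn hconv hmin hu hv
  simp only [neg_apply, ContinuousLinearMap.comp_apply, innerSL_apply_apply] at this
  unfold smoothedLagrangian
  linarith

/-- The descent lemma: the smoothed dual function is `‖A‖² / γ`-smooth, with gradient `A u` at the
point `w` where `u` is the maximizer. -/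
theorem smoothedLagrangian_le_add_sq (hφ : ConvexOn ℝ D φ) {β : ℝ} (hβ : 0 < β)
    (hβγ : β * ‖A‖ ^ 2 ≤ γ) {w z : H} {u v : E}
    (hmax : IsMaxOn (smoothedLagrangian A φ uc γ w) D u) (hu : u ∈ D) (hv : v ∈ D) :
    smoothedLagrangian A φ uc γ z v
      ≤ smoothedLagrangian A φ uc γ z u + (2 * β)⁻¹ * ‖z - w‖ ^ 2 := by
  have hgrowth := smoothedLagrangian_add_sq_le_of_isMaxOn hφ hmax hu hv
  have hcross : ⟪z - w, A (v - u)⟫ ≤ (2 * β)⁻¹ * ‖z - w‖ ^ 2 + γ / 2 * ‖v - u‖ ^ 2 :=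
    calc ⟪z - w, A (v - u)⟫ ≤ ‖z - w‖ * (‖A‖ * ‖v - u‖) :=
          (real_inner_le_norm _ _).trans (by gcongr; exact A.le_opNorm _)
      _ = (2 * β)⁻¹ * ‖z - w‖ ^ 2 + β * ‖A‖ ^ 2 / 2 * ‖v - u‖ ^ 2
          - (2 * β)⁻¹ * (‖z - w‖ - β * ‖A‖ * ‖v - u‖) ^ 2 := by field_simp; ring
      _ ≤ (2 * β)⁻¹ * ‖z - w‖ ^ 2 + β * ‖A‖ ^ 2 / 2 * ‖v - u‖ ^ 2 :=
          sub_le_self _ (by positivity)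
      _ ≤ (2 * β)⁻¹ * ‖z - w‖ ^ 2 + γ / 2 * ‖v - u‖ ^ 2 := by gcongr
  simp only [smoothedLagrangian, map_sub, inner_sub_left, inner_sub_right] at hgrowth hcross ⊢
  linarith

theorem smoothedLagrangian_change_smoothing_le {γ' t : ℝ} (hγ' : 0 ≤ γ') (ht : 0 ≤ t)
    (hγγ' : t * γ = (t + 1) * γ') {y z : H} {u v w : E}
    (hle : smoothedLagrangian A φ uc γ z v ≤ smoothedLagrangian A φ uc γ z w) :
    t * (smoothedLagrangian A φ uc γ' z v - γ' / 2 * ‖u - v‖ ^ 2) + smoothedLagrangian A φ uc γ' y u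
      ≤ t * smoothedLagrangian A φ uc γ z w + (⟪y, A u⟫ - φ u)
        + γ' / (t + 1) * ((1 / 2) * ‖v - uc‖ ^ 2) := by
  have hchange : t * smoothedLagrangian A φ uc γ' z v
      = t * smoothedLagrangian A φ uc γ z v + γ' * ((1 / 2) * ‖v - uc‖ ^ 2) := by
    unfold smoothedLagrangian
    linear_combination ((1 / 2) * ‖v - uc‖ ^ 2) * hγγ'
  have hquad : γ' / 2 * (‖v - uc‖ ^ 2 - ‖u - uc‖ ^ 2 - t * ‖u - v‖ ^ 2)
      ≤ γ' / 2 * (‖v - uc‖ ^ 2 / (t + 1)) := by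
    have := sq_norm_sub_sq_norm_sub_mul_sq_norm_sub_le ht (v - uc) (u - uc)
    rw [sub_sub_sub_cancel_right] at this
    gcongr
  have hbest := mul_le_mul_of_nonneg_left hle ht
  have hy : smoothedLagrangian A φ uc γ' y u = ⟪y, A u⟫ - φ u - γ' * ((1 / 2) * ‖u - uc‖ ^ 2) := rfl
  rw [show γ' / 2 * (‖v - uc‖ ^ 2 / (t + 1)) = γ' / (t + 1) * ((1 / 2) * ‖v - uc‖ ^ 2) by ring]
    at hquad
  linarith

variable {g : H → ℝ} {G : Set H}

theorem smoothedLagrangian_add_le_of_prox (hφ : ConvexOn ℝ D φ) (hg : ConvexOn ℝ G g) {β : ℝ}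
    (hβ : 0 < β) (hβγ : β * ‖A‖ ^ 2 ≤ γ) {w x' z : H} {u v : E}
    (hmax : IsMaxOn (smoothedLagrangian A φ uc γ w) D u) (hu : u ∈ D) (hv : v ∈ D)
    (hprox : IsMinOn (fun y ↦ g y + (2 * β)⁻¹ * ‖y - (w - β • A u)‖ ^ 2) G x')
    (hx' : x' ∈ G) (hz : z ∈ G) :
    smoothedLagrangian A φ uc γ x' v + g x'
      ≤ smoothedLagrangian A φ uc γ z u + g z
        + (2 * β)⁻¹ * (‖z - w‖ ^ 2 - ‖z - x'‖ ^ 2) := by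
  have hdescent := smoothedLagrangian_le_add_sq hφ hβ hβγ (z := x') hmax hu hv
  have hthree := three_point_of_isMinOn hg hprox hx' hz
  have expand (y : H) : (2 * β)⁻¹ * ‖y - (w - β • A u)‖ ^ 2
      = (2 * β)⁻¹ * ‖y - w‖ ^ 2 + ⟪y - w, A u⟫ + (2 * β)⁻¹ * ‖β • A u‖ ^ 2 := by
    rw [← sub_add, norm_add_sq_real, real_inner_smul_right]
    field_simp
  rw [expand, expand] at hthree
  simp only [smoothedLagrangian, inner_sub_left] at hdescent hthree ⊢
  linarith

/-- In the notation of the paper, `t = k`, `w = x̂`, `z = x̃`, the primed points are the next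
iterates, and `u`, `v` are the maximizers at `w` and `x`. -/
theorem accelerated_step_le (hφ : ConvexOn ℝ D φ) (hg : ConvexOn ℝ G g) {β t : ℝ} (hβ : 0 < β)
    (hβγ : β * ‖A‖ ^ 2 ≤ γ) (ht : 0 ≤ t) {x x' w z z' y : H} {u v v' : E}
    (hmax : IsMaxOn (smoothedLagrangian A φ uc γ w) D u) (hu : u ∈ D)
    (hmaxv : IsMaxOn (smoothedLagrangian A φ uc γ x) D v) (hv : v ∈ D) (hv' : v' ∈ D)
    (hprox : IsMinOn (fun y ↦ g y + (2 * β)⁻¹ * ‖y - (w - β • A u)‖ ^ 2) G x')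
    (hx' : x' ∈ G) (hx : x ∈ G) (hy : y ∈ G)
    (hw : (t + 1) • w = t • x + z) (hz' : z' = z - (t + 1) • (w - x')) :
    (t + 1) * (smoothedLagrangian A φ uc γ x' v' + g x')
      ≤ t * (smoothedLagrangian A φ uc γ x v - γ / 2 * ‖u - v‖ ^ 2 + g x)
        + (smoothedLagrangian A φ uc γ y u + g y)
        + (2 * (β * (t + 1)))⁻¹ * (‖z - y‖ ^ 2 - ‖z' - y‖ ^ 2) := by
  have hat_x := smoothedLagrangian_add_le_of_prox hφ hg hβ hβγ hmax hu hv' hprox hx' hx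
  have hat_y := smoothedLagrangian_add_le_of_prox hφ hg hβ hβγ hmax hu hv' hprox hx' hy
  have hgrowth := smoothedLagrangian_add_sq_le_of_isMaxOn hφ hmaxv hv hu
  have hat_x' := mul_le_mul_of_nonneg_left (hat_x.trans (add_le_add_left (add_le_add_left
    (le_sub_iff_add_le.2 hgrowth) _) _)) ht
  have telescope : (2 * (β * (t + 1)))⁻¹ * (‖z - y‖ ^ 2 - ‖z' - y‖ ^ 2)
      = (2 * β)⁻¹ * (t * (‖x - w‖ ^ 2 - ‖x - x'‖ ^ 2) + (‖y - w‖ ^ 2 - ‖y - x'‖ ^ 2)) := by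
    rw [← weighted_sq_norm_sub_eq hw hz']
    field_simp
  rw [telescope]
  linarith

theorem neg_sub_le_smoothedLagrangian_add {y : H} {u v : E} {R : ℝ} (hγ : 0 ≤ γ)
    (hmax : IsMaxOn (smoothedLagrangian A φ uc γ y) D u) (hv : v ∈ D)
    (hR : (1 / 2) * ‖v - uc‖ ^ 2 ≤ R) (hfeas : 0 ≤ ⟪y, A v⟫ + g y) :
    -φ v - γ * R ≤ smoothedLagrangian A φ uc γ y u + g y := by
  have hle : smoothedLagrangian A φ uc γ y v ≤ smoothedLagrangian A φ uc γ y u := hmax hv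
  have := mul_le_mul_of_nonneg_left hR hγ
  unfold smoothedLagrangian at hle ⊢
  linarith

end SmoothedLagrangian

section Algorithm

variable {E H : Type*} [NormedAddCommGroup E] [InnerProductSpace ℝ E]
  [NormedAddCommGroup H] [InnerProductSpace ℝ H]

/-- A run of the accelerated dual smoothing method for `min_y max_{u ∈ D} (⟪y, A u⟫ - φ u) + g y`,
where `G` is the effective domain of `g`. The sequences `x`, `xt`, `xh` are the `x`, `x̃`, `x̂`
of the paper, `us γ y` is the maximizer `u*_γ(y)`, the smoothing parameter of step `k` is
`γ₁ / (k + 1)`, and the two momentum relations are cleared of `τ k = 1 / (k + 1)`. -/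
structure IsDualSmoothingRun (A : E →L[ℝ] H) (φ : E → ℝ) (D : Set E) (uc : E) (g : H → ℝ)
    (G : Set H) (γ₁ : ℝ) (us : ℝ → H → E) (x xt xh : ℕ → H) : Prop where
  argmax_mem : ∀ γ > 0, ∀ y, us γ y ∈ D
  isMaxOn_argmax : ∀ γ > 0, ∀ y, IsMaxOn (smoothedLagrangian A φ uc γ y) D (us γ y)
  momentum : ∀ k : ℕ, ((k : ℝ) + 1) • xh k = (k : ℝ) • x k + xt k
  momentum_succ : ∀ k : ℕ, xt (k + 1) = xt k - ((k : ℝ) + 1) • (xh k - x (k + 1))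
  iterate_mem : ∀ k : ℕ, x (k + 1) ∈ G
  isMinOn_iterate : ∀ k : ℕ, IsMinOn (fun y ↦ g y + (2 * (γ₁ / (k + 1) / ‖A‖ ^ 2))⁻¹ *
    ‖y - (xh k - (γ₁ / (k + 1) / ‖A‖ ^ 2) • A (us (γ₁ / (k + 1)) (xh k)))‖ ^ 2) G (x (k + 1))

namespace IsDualSmoothingRun

variable {A : E →L[ℝ] H} {φ : E → ℝ} {D : Set E} {uc : E} {g : H → ℝ} {G : Set H} {γ₁ : ℝ}
  {us : ℝ → H → E} {x xt xh : ℕ → H} {R : ℝ} {y : H}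

/-- The smoothed dual objective `F_γ(x^{k+1})` at `γ = γ₁ / (k + 1)`, for the sequence `x` and
maximizers `us`. -/
noncomputable def smoothedValue (A : E →L[ℝ] H) (φ : E → ℝ) (uc : E) (g : H → ℝ) (γ₁ : ℝ)
    (us : ℝ → H → E) (x : ℕ → H) (k : ℕ) : ℝ :=
  smoothedLagrangian A φ uc (γ₁ / (k + 1)) (x (k + 1)) (us (γ₁ / (k + 1)) (x (k + 1)))
    + g (x (k + 1))

theorem smoothedValue_zero_le (run : IsDualSmoothingRun A φ D uc g G γ₁ us x xt xh)
    (hA : 0 < ‖A‖) (hγ₁ : 0 < γ₁) (hφ : ConvexOn ℝ D φ) (hg : ConvexOn ℝ G g) (hy : y ∈ G) :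
    smoothedValue A φ uc g γ₁ us x 0 + ‖A‖ ^ 2 / (2 * γ₁) * ‖xt 1 - y‖ ^ 2
      ≤ ⟪y, A (us γ₁ (xh 0))⟫ - φ (us γ₁ (xh 0)) + g y
        + ‖A‖ ^ 2 / (2 * γ₁) * ‖xt 0 - y‖ ^ 2 := by
  have hmem := run.argmax_mem γ₁ hγ₁
  have hw : xh 0 = xt 0 := by simpa using run.momentum 0
  have hz' : xt 1 = x 1 := by simpa [hw] using run.momentum_succ 0
  have hprox := run.isMinOn_iterate 0
  simp only [Nat.cast_zero, zero_add, div_one] at hprox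
  have hstep := smoothedLagrangian_add_le_of_prox hφ hg (by positivity)
    (div_mul_cancel₀ γ₁ (by positivity)).le (run.isMaxOn_argmax γ₁ hγ₁ (xh 0)) (hmem _)
    (hmem (x 1)) hprox (run.iterate_mem 0) hy
  have hcoeff : (2 * (γ₁ / ‖A‖ ^ 2))⁻¹ = ‖A‖ ^ 2 / (2 * γ₁) := by field_simp
  have hcenter : 0 ≤ γ₁ * ((1 / 2) * ‖us γ₁ (xh 0) - uc‖ ^ 2) := by positivity
  rw [hcoeff, norm_sub_rev y, norm_sub_rev y] at hstep
  rw [hz', ← hw]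
  simp only [smoothedValue, smoothedLagrangian, Nat.cast_zero, zero_add, div_one] at hstep ⊢
  linarith

theorem smoothedValue_succ_le (run : IsDualSmoothingRun A φ D uc g G γ₁ us x xt xh)
    (hA : 0 < ‖A‖) (hγ₁ : 0 < γ₁) (hφ : ConvexOn ℝ D φ) (hg : ConvexOn ℝ G g)
    (hR : ∀ v ∈ D, (1 / 2) * ‖v - uc‖ ^ 2 ≤ R) (hy : y ∈ G) (k : ℕ) :
    ((k : ℝ) + 2) * smoothedValue A φ uc g γ₁ us x (k + 1)
        + ‖A‖ ^ 2 / (2 * γ₁) * ‖xt (k + 2) - y‖ ^ 2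
      ≤ ((k : ℝ) + 1) * smoothedValue A φ uc g γ₁ us x k
        + (⟪y, A (us (γ₁ / (k + 2)) (xh (k + 1)))⟫ - φ (us (γ₁ / (k + 2)) (xh (k + 1))) + g y)
        + γ₁ / (k + 2) ^ 2 * R + ‖A‖ ^ 2 / (2 * γ₁) * ‖xt (k + 1) - y‖ ^ 2 := by
  have hcast : ((k + 1 : ℕ) : ℝ) + 1 = k + 2 := by push_cast; ring
  have hcast' : ((k : ℝ) + 1) + 1 = k + 2 := by ring
  have hγ : 0 < γ₁ / ((k : ℝ) + 1) := by positivity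
  have hγ' : 0 < γ₁ / ((k : ℝ) + 2) := by positivity
  have hw := run.momentum (k + 1)
  have hz' := run.momentum_succ (k + 1)
  have hprox := run.isMinOn_iterate (k + 1)
  simp only [Nat.cast_succ] at hw hz'
  simp only [hcast] at hprox
  set β := γ₁ / ((k : ℝ) + 2) / ‖A‖ ^ 2 with hβ
  have hmem := run.argmax_mem _ hγ'
  have hmax := run.isMaxOn_argmax _ hγ'
  have hstep := accelerated_step_le (β := β) (t := (k : ℝ) + 1) hφ hg (by positivity)
    (div_mul_cancel₀ _ (by positivity)).le (by positivity) (hmax _) (hmem _) (hmax _) (hmem _)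
    (hmem (x (k + 2))) hprox (run.iterate_mem (k + 1)) (run.iterate_mem k) hy hw hz'
  have hsmoothing := smoothedLagrangian_change_smoothing_le (γ := γ₁ / ((k : ℝ) + 1))
    (t := (k : ℝ) + 1) hγ'.le (by positivity) (by rw [hcast']; field_simp) (y := y)
    (z := x (k + 1)) (u := us (γ₁ / (k + 2)) (xh (k + 1)))
    (w := us (γ₁ / (k + 1)) (x (k + 1)))
    (run.isMaxOn_argmax _ hγ _ (hmem (x (k + 1))))
  have hradius := mul_le_mul_of_nonneg_left (hR _ (hmem (x (k + 1))))
    (show 0 ≤ γ₁ / ((k : ℝ) + 2) ^ 2 by positivity)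
  have hcoeff : (2 * (β * ((k : ℝ) + 2)))⁻¹ = ‖A‖ ^ 2 / (2 * γ₁) := by rw [hβ]; field_simp
  have herror : γ₁ / ((k : ℝ) + 2) / (k + 2) = γ₁ / (k + 2) ^ 2 := by rw [div_div, sq]
  rw [hcast', hcoeff] at hstep
  rw [hcast', herror] at hsmoothing
  simp only [smoothedValue, hcast]
  linarith

theorem weighted_smoothedValue_le (run : IsDualSmoothingRun A φ D uc g G γ₁ us x xt xh)
    (hA : 0 < ‖A‖) (hγ₁ : 0 < γ₁) (hφ : ConvexOn ℝ D φ) (hg : ConvexOn ℝ G g)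
    (hR : ∀ v ∈ D, (1 / 2) * ‖v - uc‖ ^ 2 ≤ R) (hy : y ∈ G) (k : ℕ) :
    ((k : ℝ) + 1) * smoothedValue A φ uc g γ₁ us x k
        + ‖A‖ ^ 2 / (2 * γ₁) * ‖xt (k + 1) - y‖ ^ 2
      ≤ ∑ i ∈ Finset.range (k + 1),
          (⟪y, A (us (γ₁ / (i + 1)) (xh i))⟫ - φ (us (γ₁ / (i + 1)) (xh i)) + g y)
        + γ₁ * R * (1 - 1 / (k + 1)) + ‖A‖ ^ 2 / (2 * γ₁) * ‖xt 0 - y‖ ^ 2 := by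
  induction k with
  | zero => simpa using run.smoothedValue_zero_le hA hγ₁ hφ hg hy
  | succ k ih =>
    have hstep := run.smoothedValue_succ_le hA hγ₁ hφ hg hR hy k
    have hR0 : 0 ≤ R := le_trans (by positivity) (hR _ (run.argmax_mem 1 one_pos (x 0)))
    have herror : γ₁ / ((k : ℝ) + 2) ^ 2 * R ≤ γ₁ * R * (1 / (k + 1) - 1 / (k + 2)) :=
      calc γ₁ / ((k : ℝ) + 2) ^ 2 * R = γ₁ * R * (1 / ((k + 2) * (k + 2))) := by ring
        _ ≤ γ₁ * R * (1 / ((k + 1) * (k + 2))) := by gcongr; norm_num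
        _ = γ₁ * R * (1 / (k + 1) - 1 / (k + 2)) := by field_simp; ring
    have hcast : ((k + 1 : ℕ) : ℝ) + 1 = k + 2 := by push_cast; ring
    rw [Finset.sum_range_succ, hcast]
    linarith

theorem dual_gap_le (run : IsDualSmoothingRun A φ D uc g G γ₁ us x xt xh)
    (hA : 0 < ‖A‖) (hγ₁ : 0 < γ₁) (hφ : ConvexOn ℝ D φ) (hg : ConvexOn ℝ G g)
    (hR : ∀ v ∈ D, (1 / 2) * ‖v - uc‖ ^ 2 ≤ R) {v : E} (hv : v ∈ D)
    (hfeas : ∀ z ∈ G, 0 ≤ ⟪z, A v⟫ + g z) {ys : H}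
    (hsaddle : ∀ u ∈ D, φ v + ⟪ys, A u⟫ + g ys ≤ φ u) (hy : y ∈ G) (k : ℕ) {ubar : E}
    (hubar : ((k : ℝ) + 1) • ubar = ∑ i ∈ Finset.range (k + 1), us (γ₁ / (i + 1)) (xh i)) :
    ((k : ℝ) + 1) * (g ys - g y - ⟪y - ys, A ubar⟫)
      ≤ 2 * γ₁ * R + ‖A‖ ^ 2 / (2 * γ₁) * ‖xt 0 - y‖ ^ 2 := by
  have hk : 0 < γ₁ / ((k : ℝ) + 1) := by positivity
  have hR0 : 0 ≤ R := le_trans (by positivity) (hR v hv)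
  have hupper := run.weighted_smoothedValue_le hA hγ₁ hφ hg hR hy k
  have hlower : -((k : ℝ) + 1) * φ v - γ₁ * R
      ≤ ((k : ℝ) + 1) * smoothedValue A φ uc g γ₁ us x k :=
    calc -((k : ℝ) + 1) * φ v - γ₁ * R = ((k : ℝ) + 1) * (-φ v - γ₁ / (k + 1) * R) := by field_simp
      _ ≤ _ := by
        gcongr
        exact neg_sub_le_smoothedLagrangian_add hk.le (run.isMaxOn_argmax _ hk _) hv (hR v hv)
          (hfeas _ (run.iterate_mem k))
  have haverage :
      ∑ i ∈ Finset.range (k + 1),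
          (⟪y, A (us (γ₁ / (i + 1)) (xh i))⟫ - φ (us (γ₁ / (i + 1)) (xh i)) + g y)
        ≤ ((k : ℝ) + 1) * (⟪y - ys, A ubar⟫ + (g y - g ys - φ v)) :=
    calc _ ≤ ∑ i ∈ Finset.range (k + 1),
          (⟪y - ys, A (us (γ₁ / (i + 1)) (xh i))⟫ + (g y - g ys - φ v)) := by
          refine Finset.sum_le_sum fun i _ ↦ ?_
          have := hsaddle _ (run.argmax_mem (γ₁ / (i + 1)) (by positivity) (xh i))
          rw [inner_sub_left]
          linarith
      _ = _ := by
          rw [Finset.sum_add_distrib, ← inner_sum, ← map_sum, ← hubar, map_smul,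
            real_inner_smul_right, Finset.sum_const, Finset.card_range, nsmul_eq_mul, mul_add]
          push_cast
          rfl
  have htail : 0 ≤ γ₁ * R * (1 / ((k : ℝ) + 1)) := by positivity
  have hdist : 0 ≤ ‖A‖ ^ 2 / (2 * γ₁) * ‖xt (k + 1) - y‖ ^ 2 := by positivity
  linarith

theorem infDist_le [CompleteSpace H] {K : Set H} {b : H}
    (run : IsDualSmoothingRun A φ D uc (fun y ↦ supportFunction K y - ⟪b, y⟫) (barrierCone K)
      γ₁ us x xt xh)
    (hA : 0 < ‖A‖) (hγ₁ : 0 < γ₁) (hφ : ConvexOn ℝ D φ) (hK : Convex ℝ K)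
    (hR : ∀ v ∈ D, (1 / 2) * ‖v - uc‖ ^ 2 ≤ R) {v : E} (hv : v ∈ D) (hfeas : b - A v ∈ K)
    {ys : H} (hsaddle : ∀ u ∈ D, ∀ r ∈ K, φ v + ⟪ys, A u - b + r⟫ ≤ φ u) (k : ℕ) {ubar : E}
    (hubar : ((k : ℝ) + 1) • ubar = ∑ i ∈ Finset.range (k + 1), us (γ₁ / (i + 1)) (xh i)) :
    ((k : ℝ) + 1) * Metric.infDist (b - A ubar) K
      ≤ ‖A‖ ^ 2 / γ₁ * (‖xt 0 - ys‖ + √(‖xt 0 - ys‖ ^ 2 + 4 * γ₁ ^ 2 * R / ‖A‖ ^ 2)) := by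
  have hKne : K.Nonempty := ⟨_, hfeas⟩
  have hys (u : E) (hu : u ∈ D) := mem_barrierCone_and_supportFunction_sub_inner_le hKne
    fun r hr ↦ le_sub_iff_add_le'.2 (hsaddle u hu r hr)
  have hweak (z : H) (hz : z ∈ barrierCone K) : 0 ≤ ⟪z, A v⟫ + (supportFunction K z - ⟪b, z⟫) := by
    have := inner_le_supportFunction hz hfeas
    rw [inner_sub_right, real_inner_comm b z] at this
    linarith
  obtain ⟨e, he, hsep⟩ := exists_norm_le_one_supportFunction_add_smul_le hKne hK (b - A ubar)
  have penalty (s : ℝ) (hs : 0 ≤ s) : ((k : ℝ) + 1) * Metric.infDist (b - A ubar) K * s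
      ≤ 2 * γ₁ * R + ‖A‖ ^ 2 / (2 * γ₁) * (‖xt 0 - ys‖ + s) ^ 2 := by
    obtain ⟨hy, hsupp⟩ := hsep ys (hys v hv).1 s hs
    have hgap := run.dual_gap_le hA hγ₁ hφ (convexOn_supportFunction_sub_inner hKne b) hR hv hweak
      (fun u hu ↦ by linarith [(hys u hu).2]) hy k hubar
    have hnorm : ‖xt 0 - (ys + s • e)‖ ≤ ‖xt 0 - ys‖ + s := by
      rw [← sub_sub]
      refine (norm_sub_le _ _).trans ?_
      rw [norm_smul, Real.norm_of_nonneg hs]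
      gcongr
      exact mul_le_of_le_one_right hs he
    have hdist : s * Metric.infDist (b - A ubar) K ≤ supportFunction K ys - ⟪b, ys⟫ -
        (supportFunction K (ys + s • e) - ⟪b, ys + s • e⟫) - ⟪ys + s • e - ys, A ubar⟫ := by
      rw [add_sub_cancel_left, inner_add_right, real_inner_smul_left, real_inner_smul_right]
      rw [inner_sub_right, real_inner_comm b e] at hsupp
      linarith
    calc ((k : ℝ) + 1) * Metric.infDist (b - A ubar) K * s
        = ((k : ℝ) + 1) * (s * Metric.infDist (b - A ubar) K) := by ring
      _ ≤ 2 * γ₁ * R + ‖A‖ ^ 2 / (2 * γ₁) * ‖xt 0 - (ys + s • e)‖ ^ 2 :=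
          (mul_le_mul_of_nonneg_left hdist (by positivity)).trans hgap
      _ ≤ _ := by gcongr
  have hsolve := le_of_forall_mul_le_add_sq (by positivity) penalty
  have hcoeff : 2 * (‖A‖ ^ 2 / (2 * γ₁)) = ‖A‖ ^ 2 / γ₁ := by field_simp
  have hradicand : 2 * γ₁ * R / (‖A‖ ^ 2 / (2 * γ₁)) = 4 * γ₁ ^ 2 * R / ‖A‖ ^ 2 := by
    field_simp
    ring
  rwa [hcoeff, hradicand] at hsolve

end IsDualSmoothingRun
end Algorithm

section ExtendedReals

variable {E H : Type*} [NormedAddCommGroup E] [InnerProductSpace ℝ E]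
  [NormedAddCommGroup H] [InnerProductSpace ℝ H]
  {A : E →L[ℝ] H} {U : Set E} {φ : E → EReal} {uc : E} {K : Set H} {b : H}

theorem convexOn_toReal (hU : Convex ℝ U) (hbot : ∀ v, φ v ≠ ⊥)
    (hφ : ∀ v w : E, ∀ a c : ℝ, 0 ≤ a → 0 ≤ c → a + c = 1 →
      φ (a • v + c • w) ≤ (a : EReal) * φ v + (c : EReal) * φ w) :
    ConvexOn ℝ {v | v ∈ U ∧ φ v ≠ ⊤} fun v ↦ (φ v).toReal := by
  have le_coe {v w : E} (hv : φ v ≠ ⊤) (hw : φ w ≠ ⊤) {a c : ℝ} (ha : 0 ≤ a) (hc : 0 ≤ c)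
      (hac : a + c = 1) :
      φ (a • v + c • w) ≤ ((a * (φ v).toReal + c * (φ w).toReal : ℝ) : EReal) := by
    simpa [EReal.coe_toReal hv (hbot v), EReal.coe_toReal hw (hbot w)] using hφ v w a c ha hc hac
  refine ⟨fun v hv w hw a c ha hc hac ↦ ⟨hU hv.1 hw.1 ha hc hac, ?_⟩,
    fun v hv w hw a c ha hc hac ↦ ?_⟩
  · exact ((le_coe hv.2 hw.2 ha hc hac).trans_lt (EReal.coe_lt_top _)).ne
  · exact EReal.toReal_le_toReal (le_coe hv.2 hw.2 ha hc hac) (hbot _) (EReal.coe_ne_top _)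

theorem isMaxOn_smoothedLagrangian_toReal (hbot : ∀ v, φ v ≠ ⊥) {γ : ℝ} {y : H} {u : E}
    (hu : φ u ≠ ⊤)
    (hmax : ∀ v ∈ U, (⟪y, A v⟫ : EReal) - φ v - ((γ * ((1 / 2) * ‖v - uc‖ ^ 2) : ℝ) : EReal)
      ≤ (⟪y, A u⟫ : EReal) - φ u - ((γ * ((1 / 2) * ‖u - uc‖ ^ 2) : ℝ) : EReal)) :
    IsMaxOn (smoothedLagrangian A (fun v ↦ (φ v).toReal) uc γ y) {v | v ∈ U ∧ φ v ≠ ⊤} u := by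
  rintro v ⟨hvU, hv⟩
  have := hmax v hvU
  rw [← EReal.coe_toReal hv (hbot v), ← EReal.coe_toReal hu (hbot u)] at this
  exact_mod_cast this

theorem isMinOn_supportFunction_sub_inner_add (hK : K.Nonempty) {q : H → ℝ} {p z : H}
    (hmin : ∀ y, (⨆ r ∈ K, (⟪p, r⟫ : EReal)) - (⟪b, p⟫ : ℝ) + (q p : EReal)
      ≤ (⨆ r ∈ K, (⟪y, r⟫ : EReal)) - (⟪b, y⟫ : ℝ) + (q y : EReal))
    (hz : z ∈ barrierCone K) :
    p ∈ barrierCone K ∧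
      IsMinOn (fun y ↦ supportFunction K y - ⟪b, y⟫ + q y) (barrierCone K) p := by
  have hp : p ∈ barrierCone K := by
    refine mem_barrierCone_of_iSup_ne_top fun htop ↦ ?_
    have := hmin z
    rw [htop, ← coe_supportFunction hK hz, EReal.top_sub_coe, EReal.top_add_coe, top_le_iff] at this
    exact EReal.coe_ne_top (supportFunction K z - ⟪b, z⟫ + q z) (by exact_mod_cast this)
  refine ⟨hp, fun y hy ↦ ?_⟩
  have := hmin y
  rw [← coe_supportFunction hK hp, ← coe_supportFunction hK hy] at this
  exact_mod_cast this

theorem isDualSmoothingRun_toReal {us : ℝ → H → E} {γ₁ : ℝ} {x xt xh : ℕ → H}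
    {prox : ℝ → H → H} {z : H} (hbot : ∀ v, φ v ≠ ⊥)
    (hmem : ∀ γ > 0, ∀ y, us γ y ∈ U) (hfin : ∀ γ > 0, ∀ y, φ (us γ y) ≠ ⊤)
    (hmax : ∀ γ > 0, ∀ y, ∀ v ∈ U,
      (⟪y, A v⟫ : EReal) - φ v - ((γ * ((1 / 2) * ‖v - uc‖ ^ 2) : ℝ) : EReal)
        ≤ (⟪y, A (us γ y)⟫ : EReal) - φ (us γ y)
          - ((γ * ((1 / 2) * ‖us γ y - uc‖ ^ 2) : ℝ) : EReal))
    (hK : K.Nonempty) (hz : z ∈ barrierCone K)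
    (hprox : ∀ β > 0, ∀ c y, (⨆ r ∈ K, (⟪prox β c, r⟫ : EReal)) - (⟪b, prox β c⟫ : ℝ)
        + (((2 * β)⁻¹ * ‖prox β c - c‖ ^ 2 : ℝ) : EReal)
      ≤ (⨆ r ∈ K, (⟪y, r⟫ : EReal)) - (⟪b, y⟫ : ℝ) + (((2 * β)⁻¹ * ‖y - c‖ ^ 2 : ℝ) : EReal))
    (hA : 0 < ‖A‖) (hγ₁ : 0 < γ₁)
    (hxh : ∀ k : ℕ, xh k = (1 - 1 / ((k : ℝ) + 1)) • x k + (1 / ((k : ℝ) + 1)) • xt k)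
    (hx : ∀ k : ℕ, x (k + 1) = prox (γ₁ / (k + 1) / ‖A‖ ^ 2)
      (xh k - (γ₁ / (k + 1) / ‖A‖ ^ 2) • A (us (γ₁ / (k + 1)) (xh k))))
    (hxt : ∀ k : ℕ, xt (k + 1) = xt k - ((k : ℝ) + 1) • (xh k - x (k + 1))) :
    IsDualSmoothingRun A (fun v ↦ (φ v).toReal) {v | v ∈ U ∧ φ v ≠ ⊤} uc
      (fun y ↦ supportFunction K y - ⟪b, y⟫) (barrierCone K) γ₁ us x xt xh := by
  have hiter (k : ℕ) := isMinOn_supportFunction_sub_inner_add hK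
    (q := fun y ↦ (2 * (γ₁ / (k + 1) / ‖A‖ ^ 2))⁻¹ *
      ‖y - (xh k - (γ₁ / (k + 1) / ‖A‖ ^ 2) • A (us (γ₁ / (k + 1)) (xh k)))‖ ^ 2)
    (hprox (γ₁ / (k + 1) / ‖A‖ ^ 2) (by positivity)
      (xh k - (γ₁ / (k + 1) / ‖A‖ ^ 2) • A (us (γ₁ / (k + 1)) (xh k)))) hz
  simp only [← hx] at hiter
  exact
    { argmax_mem := fun γ hγ y ↦ ⟨hmem γ hγ y, hfin γ hγ y⟩
      isMaxOn_argmax := fun γ hγ y ↦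
        isMaxOn_smoothedLagrangian_toReal hbot (hfin γ hγ y) (hmax γ hγ y)
      momentum := fun k ↦ by
        rw [hxh]
        match_scalars <;> field_simp
        ring
      momentum_succ := hxt
      iterate_mem := fun k ↦ (hiter k).1
      isMinOn_iterate := fun k ↦ (hiter k).2 }

end ExtendedReals
end DualSmoothing

open DualSmoothing in
theorem stmt_19_general {E H : Type*} [NormedAddCommGroup E] [InnerProductSpace ℝ E]
    [NormedAddCommGroup H] [InnerProductSpace ℝ H] [CompleteSpace H]
    {U : Set E} (hUcx : Convex ℝ U) {φ : E → EReal} (hφbot : ∀ v, φ v ≠ ⊥)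
    (hφcx : ∀ v w : E, ∀ a c : ℝ, 0 ≤ a → 0 ≤ c → a + c = 1 →
      φ (a • v + c • w) ≤ (a : EReal) * φ v + (c : EReal) * φ w)
    {A : E →L[ℝ] H} (hAnorm : 0 < ‖A‖) {bvec : H} {K : Set H} (hKcx : Convex ℝ K)
    {φstar : ℝ} {upr : E} (huprU : upr ∈ U) (huprfeas : A upr - bvec ∈ -K)
    (huprval : φ upr = (φstar : EReal))
    {uc : E} {DU : ℝ} (hDU : ∀ v ∈ U, φ v ≠ ⊤ → (1 / 2) * ‖v - uc‖ ^ 2 ≤ DU)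
    {ustar : ℝ → H → E} (humem : ∀ γ > (0 : ℝ), ∀ x, ustar γ x ∈ U)
    (hufin : ∀ γ > (0 : ℝ), ∀ x, φ (ustar γ x) ≠ ⊤)
    (humax : ∀ γ > (0 : ℝ), ∀ x, ∀ v ∈ U,
      (⟪x, A v⟫ : EReal) - φ v - ((γ * ((1 / 2) * ‖v - uc‖ ^ 2) : ℝ) : EReal)
        ≤ (⟪x, A (ustar γ x)⟫ : EReal) - φ (ustar γ x)
          - ((γ * ((1 / 2) * ‖ustar γ x - uc‖ ^ 2) : ℝ) : EReal))
    {g : H → EReal} (hg : ∀ x, g x = (⨆ r ∈ K, (⟪x, r⟫ : EReal)) - ((⟪bvec, x⟫ : ℝ) : EReal))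
    {prox : ℝ → H → H}
    (hprox : ∀ β > (0 : ℝ), ∀ x y,
      g (prox β x) + (((2 * β)⁻¹ * ‖prox β x - x‖ ^ 2 : ℝ) : EReal)
        ≤ g y + (((2 * β)⁻¹ * ‖y - x‖ ^ 2 : ℝ) : EReal))
    {γ1 : ℝ} (hγ1 : 0 < γ1) {τ : ℕ → ℝ} (hτ : ∀ k : ℕ, τ k = 1 / ((k : ℝ) + 1))
    {γs : ℕ → ℝ} (hγs : ∀ k : ℕ, γs (k + 1) = γ1 / ((k : ℝ) + 1))
    {x xt xh : ℕ → H} (hxt0 : xt 0 = x 0)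
    (hxh : ∀ k : ℕ, xh k = (1 - τ k) • x k + τ k • xt k)
    (hxrec : ∀ k : ℕ, x (k + 1) = prox (γs (k + 1) / ‖A‖ ^ 2)
      (xh k - (γs (k + 1) / ‖A‖ ^ 2) • A (ustar (γs (k + 1)) (xh k))))
    (hxtrec : ∀ k : ℕ, xt (k + 1) = xt k - (τ k)⁻¹ • (xh k - x (k + 1)))
    {ubar : ℕ → E}
    (hubar : ∀ k : ℕ, ubar k = (γ1 * ((k : ℝ) + 1))⁻¹ •
      ∑ i ∈ Finset.range (k + 1), (γs (i + 1) / τ i) • ustar (γs (i + 1)) (xh i))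
    {xs : H}
    (hsaddle : ∀ v ∈ U, ∀ r ∈ K, ((φstar + ⟪xs, A v - bvec + r⟫ : ℝ) : EReal) ≤ φ v) (k : ℕ) :
    Metric.infDist (bvec - A (ubar k)) K
      ≤ ‖A‖ ^ 2 * (‖x 0 - xs‖
          + √(‖x 0 - xs‖ ^ 2 + 2 * (‖A‖ ^ 2)⁻¹ * (2 * γ1 ^ 2) * DU)) / (γ1 * ((k : ℝ) + 1)) := by
  have hfeas : bvec - A upr ∈ K := by simpa using huprfeas
  have hsaddle' (v : E) (hv : v ∈ U ∧ φ v ≠ ⊤) (r : H) (hr : r ∈ K) :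
      φstar + ⟪xs, A v - bvec + r⟫ ≤ (φ v).toReal := by
    rw [← EReal.coe_le_coe_iff, EReal.coe_toReal hv.2 (hφbot v)]
    exact hsaddle v hv.1 r hr
  have hupr : upr ∈ U ∧ φ upr ≠ ⊤ := ⟨huprU, huprval ▸ EReal.coe_ne_top _⟩
  have hxs := (mem_barrierCone_and_supportFunction_sub_inner_le ⟨_, hfeas⟩
    fun r hr ↦ le_sub_iff_add_le'.2 (hsaddle' upr hupr r hr)).1
  simp only [hg] at hprox
  simp only [hγs, hτ, one_div, inv_inv] at hxh hxrec hxtrec hubar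
  have run := isDualSmoothingRun_toReal hφbot humem hufin humax ⟨_, hfeas⟩ hxs hprox hAnorm hγ1
    (by simpa only [one_div] using hxh) hxrec hxtrec
  have haverage : ((k : ℝ) + 1) • ubar k
      = ∑ i ∈ Finset.range (k + 1), ustar (γ1 / (i + 1)) (xh i) := by
    rw [hubar, Finset.smul_sum, Finset.smul_sum]
    refine Finset.sum_congr rfl fun i _ ↦ ?_
    match_scalars
    field_simp
  have hrate := run.infDist_le hAnorm hγ1 (convexOn_toReal hUcx hφbot hφcx) hKcx
    (fun v hv ↦ hDU v hv.1 hv.2) hupr hfeas (by simpa [huprval] using hsaddle') k haverage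
  rw [hxt0] at hrate
  rw [le_div_iff₀ (by positivity)]
  calc _ = γ1 * (((k : ℝ) + 1) * Metric.infDist (bvec - A (ubar k)) K) := by ring
    _ ≤ γ1 * _ := mul_le_mul_of_nonneg_left hrate hγ1.le
    _ = _ := by
      rw [show 4 * γ1 ^ 2 * DU / ‖A‖ ^ 2 = 2 * (‖A‖ ^ 2)⁻¹ * (2 * γ1 ^ 2) * DU by ring]
      field_simp

theorem stmt_19
    {n p : ℕ} (hn : 1 ≤ n) (hp : 1 ≤ p)
    (U : Set (EuclideanSpace ℝ (Fin n)))
    (hUne : U.Nonempty) (hUcl : IsClosed U) (hUcx : Convex ℝ U)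
    (φ : EuclideanSpace ℝ (Fin n) → EReal)
    (hφbot : ∀ v, φ v ≠ ⊥)
    (hφlsc : LowerSemicontinuous φ)
    (hφcx : ∀ v w : EuclideanSpace ℝ (Fin n), ∀ a c : ℝ, 0 ≤ a → 0 ≤ c → a + c = 1 →
      φ (a • v + c • w) ≤ (a : EReal) * φ v + (c : EReal) * φ w)
    (hφdom : ∃ v ∈ U, φ v ≠ ⊤)
    (A : EuclideanSpace ℝ (Fin n) →L[ℝ] EuclideanSpace ℝ (Fin p))
    (hAnorm : 0 < ‖A‖)
    (bvec : EuclideanSpace ℝ (Fin p))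
    (K : Set (EuclideanSpace ℝ (Fin p)))
    (hKne : K.Nonempty) (hKcl : IsClosed K) (hKcx : Convex ℝ K)
    (φstar : ℝ) (upr : EuclideanSpace ℝ (Fin n))
    (huprU : upr ∈ U) (huprfeas : A upr - bvec ∈ -K) (huprval : φ upr = (φstar : EReal))
    (hprmin : ∀ v ∈ U, A v - bvec ∈ -K → (φstar : EReal) ≤ φ v)
    (uc : EuclideanSpace ℝ (Fin n)) (hucU : uc ∈ U)
    (DU : ℝ)
    (hDUbdd : BddAbove ((fun v => (1/2) * ‖v - uc‖^2) '' {v | v ∈ U ∧ φ v ≠ ⊤}))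
    (hDU : DU = sSup ((fun v => (1/2) * ‖v - uc‖^2) '' {v | v ∈ U ∧ φ v ≠ ⊤}))
    (ustar : ℝ → EuclideanSpace ℝ (Fin p) → EuclideanSpace ℝ (Fin n))
    (humem : ∀ γ > (0:ℝ), ∀ x, ustar γ x ∈ U)
    (hufin : ∀ γ > (0:ℝ), ∀ x, φ (ustar γ x) ≠ ⊤)
    (humax : ∀ γ > (0:ℝ), ∀ x, ∀ v ∈ U,
      (⟪x, A v⟫ : EReal) - φ v - ((γ * ((1/2) * ‖v - uc‖^2) : ℝ) : EReal)
        ≤ (⟪x, A (ustar γ x)⟫ : EReal) - φ (ustar γ x)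
          - ((γ * ((1/2) * ‖ustar γ x - uc‖^2) : ℝ) : EReal))
    (g : EuclideanSpace ℝ (Fin p) → EReal)
    (hg : ∀ x, g x = (⨆ r ∈ K, (⟪x, r⟫ : EReal)) - ((⟪bvec, x⟫ : ℝ) : EReal))
    (F : EuclideanSpace ℝ (Fin p) → EReal)
    (hF : ∀ x, F x = (⨆ v ∈ U, ((⟪x, A v⟫ : EReal) - φ v)) + g x)
    (prox : ℝ → EuclideanSpace ℝ (Fin p) → EuclideanSpace ℝ (Fin p))
    (hprox : ∀ β > (0:ℝ), ∀ x y,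
      g (prox β x) + (((2*β)⁻¹ * ‖prox β x - x‖^2 : ℝ) : EReal)
        ≤ g y + (((2*β)⁻¹ * ‖y - x‖^2 : ℝ) : EReal))
    (hproxu : ∀ β > (0:ℝ), ∀ x y,
      (∀ w, g y + (((2*β)⁻¹ * ‖y - x‖^2 : ℝ) : EReal)
          ≤ g w + (((2*β)⁻¹ * ‖w - x‖^2 : ℝ) : EReal)) → y = prox β x)
    (γ1 : ℝ) (hγ1 : 0 < γ1)
    (τ : ℕ → ℝ) (hτ : ∀ k : ℕ, τ k = 1/((k:ℝ) + 1))
    (γs : ℕ → ℝ) (hγs : ∀ k : ℕ, γs (k+1) = γ1 / ((k:ℝ) + 1))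
    (x xt xh : ℕ → EuclideanSpace ℝ (Fin p))
    (hxt0 : xt 0 = x 0) (hx0dom : F (x 0) ≠ ⊤)
    (hxh : ∀ k : ℕ, xh k = (1 - τ k) • x k + τ k • xt k)
    (hxrec : ∀ k : ℕ, x (k+1)
        = prox (γs (k+1)/‖A‖^2) (xh k - (γs (k+1)/‖A‖^2) • A (ustar (γs (k+1)) (xh k))))
    (hxtrec : ∀ k : ℕ, xt (k+1) = xt k - (τ k)⁻¹ • (xh k - x (k+1)))
    (ubar : ℕ → EuclideanSpace ℝ (Fin n))
    (hubar : ∀ k : ℕ, ubar k = (γ1 * ((k:ℝ) + 1))⁻¹ •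
        ∑ i ∈ Finset.range (k+1), (γs (i+1) / τ i) • ustar (γs (i+1)) (xh i))
    (xs : EuclideanSpace ℝ (Fin p))
    (hxsmin : ∀ y, F xs ≤ F y) (hFs : F xs = ((-φstar : ℝ) : EReal))
    (hsaddle : ∀ v ∈ U, ∀ r ∈ K,
      ((φstar + ⟪xs, A v - bvec + r⟫ : ℝ) : EReal) ≤ φ v)
    :
    ∀ k : ℕ,
      Metric.infDist (bvec - A (ubar k)) K
        ≤ ‖A‖^2 * (‖x 0 - xs‖
            + Real.sqrt (‖x 0 - xs‖^2 + 2*(‖A‖^2)⁻¹*(2*γ1^2 + γ1)*DU))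
          / (γ1 * ((k:ℝ) + 1)) := by
  intro k
  have hDU0 : 0 ≤ DU := hDU ▸ Real.sSup_nonneg (by rintro _ ⟨v, -, rfl⟩; positivity)
  refine (stmt_19_general hUcx hφbot hφcx hAnorm hKcx huprU huprfeas huprval
    (fun v hv hfin ↦ hDU ▸ le_csSup hDUbdd ⟨v, ⟨hv, hfin⟩, rfl⟩) humem hufin humax hg hprox hγ1
    hτ hγs hxt0 hxh hxrec hxtrec hubar hsaddle k).trans ?_
  gcongr
  linarith
end
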